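/- arXiv:math/0508153 — 4 statements merged into one kernel-verified Lean document; each statement's English description precedes it below -/
import Mathlib

section
/- For every integer n ≥ 2, |R(w_0^B)| = (n² − 2)(n² − 3) · |R(w′)|. -/
/-- The generator `sᵢ` of the hyperoctahedral group `Bₙ`, realized as a permutation of `ℤ`:
`s₀` swaps `1` and `-1`; for `i ≥ 1`, `sᵢ` swaps `i` with `i+1` and `-i` with `-(i+1)`,
fixing all other integers. -/
def sB (i : ℕ) : Equiv.Perm ℤ :=
  if i = 0 then Equiv.swap 1 (-1)
  else Equiv.swap (i : ℤ) ((i : ℤ) + 1) * Equiv.swap (-(i : ℤ)) (-((i : ℤ) + 1))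

/-- The product `s_{i₁} ⋯ s_{i_ℓ}` corresponding to the word `i₁ ⋯ i_ℓ`. -/
def wordProd (l : List ℕ) : Equiv.Perm ℤ := (l.map sB).prod

/-- The underlying function of the longest element `w₀ᴮ ∈ Bₙ`: `i ↦ -i` on `{-n, …, n}`,
fixing all other integers. -/
def w0BFun (n : ℕ) : ℤ → ℤ := fun i => if -(n : ℤ) ≤ i ∧ i ≤ (n : ℤ) then -i else i

lemma w0BFun_involutive (n : ℕ) : Function.Involutive (w0BFun n) := by
  intro i
  unfold w0BFun
  split_ifs <;> omega

/-- The longest element `w₀ᴮ ∈ Bₙ`, as a permutation of `ℤ`. -/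
def w0B (n : ℕ) : Equiv.Perm ℤ := (w0BFun_involutive n).toPerm

/-- `l` is a reduced decomposition of `w` in `Bₙ`: a word over the alphabet `{0, …, n-1}`
whose product of generators is `w`, of minimal length among all such words. -/
def IsReducedWord (n : ℕ) (w : Equiv.Perm ℤ) (l : List ℕ) : Prop :=
  (∀ i ∈ l, i < n) ∧ wordProd l = w ∧
    ∀ l' : List ℕ, (∀ i ∈ l', i < n) → wordProd l' = w → l.length ≤ l'.length

/-- `R(w)`, the set of reduced decompositions of `w` in `Bₙ`. -/
def RSet (n : ℕ) (w : Equiv.Perm ℤ) : Set (List ℕ) := {l | IsReducedWord n w l}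

/-- The length `ℓ(w)` of `w ∈ Bₙ`: the minimal length of a word over `{0, …, n-1}`
whose product of generators is `w`. -/
noncomputable def lenB (n : ℕ) (w : Equiv.Perm ℤ) : ℕ :=
  sInf {m : ℕ | ∃ l : List ℕ, (∀ i ∈ l, i < n) ∧ wordProd l = w ∧ l.length = m}

/-- Whether a word begins with `k (k+1) k` or `(k+1) k (k+1)` for some `k ≥ 1`. -/
def isYB : List ℕ → Bool
  | a :: b :: c :: _ => (a != 0 && b == a + 1 && c == a) || (b != 0 && a == b + 1 && c == b + 1)
  | _ => false

/-- The number of Yang–Baxter moves in a word. -/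
def ybCount (l : List ℕ) : ℕ :=
  ((Finset.range l.length).filter fun j => isYB (l.drop j) = true).card

/-- Whether a word begins with `0101` or `1010`. -/
def is01 : List ℕ → Bool
  | a :: b :: c :: d :: _ =>
      (a == 0 && b == 1 && c == 0 && d == 1) || (a == 1 && b == 0 && c == 1 && d == 0)
  | _ => false

/-- The number of 01 moves in a word. -/
def m01Count (l : List ℕ) : ℕ :=
  ((Finset.range l.length).filter fun j => is01 (l.drop j) = true).card

/-- The underlying function of `w_k ∈ Bₙ`: `k ↦ -(k+2)`, `k+2 ↦ -k`, and `i ↦ -i` for all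
other `i ∈ {1, …, n}`, extended by `w(-i) = -w(i)` and fixing all integers outside
`{-n, …, -1, 1, …, n}`. -/
def wkFun (n k : ℕ) : ℤ → ℤ := fun i =>
  if -(n : ℤ) ≤ i ∧ i ≤ (n : ℤ) then
    if i = (k : ℤ) then -((k : ℤ) + 2)
    else if i = (k : ℤ) + 2 then -(k : ℤ)
    else if i = -(k : ℤ) then (k : ℤ) + 2
    else if i = -((k : ℤ) + 2) then (k : ℤ)
    else -i
  else i

/-- The underlying function of `w' ∈ Bₙ`: `1 ↦ 1`, `2 ↦ 2`, and `i ↦ -i` for `3 ≤ i ≤ n`,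
extended by `w(-i) = -w(i)` and fixing all integers outside `{-n, …, -1, 1, …, n}`. -/
def wpFun (n : ℕ) : ℤ → ℤ := fun i =>
  if (-(n : ℤ) ≤ i ∧ i ≤ (n : ℤ)) ∧ (i < -2 ∨ 2 < i) then -i else i

/-- `w`, viewed as a signed permutation of `{1, …, n}` via the values `w(1), …, w(n)`,
contains the signed pattern `p` (given by its list of values `p(1), …, p(m)`). -/
def ContainsPattern (n : ℕ) (w : ℤ → ℤ) (p : List ℤ) : Prop :=
  ∃ j : Fin p.length → ℤ, StrictMono j ∧ (∀ r, 1 ≤ j r ∧ j r ≤ (n : ℤ)) ∧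
    (∀ r s, w (j r) < w (j s) ↔ p.get r < p.get s) ∧
    (∀ r, w (j r) < 0 ↔ p.get r < 0)

/-!
Regard `B_n` inside `B_{2n}`, where the reduced words of its elements stay the same. A cover
identity, summing with signs over the reflections that move a fixed position `r`, gives the type B
transition recurrence of Lascoux–Schützenberger and Billey; where only two of its terms survive, two
elements have equally many reduced words. Applied at the positions `n, n - 1, …, 1` in turn, it
carries `w₀ᴮ` and `w'` to Grassmannian elements of shifted shapes `(2n - 1, 2n - 3, …, 1)` and
`(2n - 1, 2n - 3, …, 5)`. The reduced words of a Grassmannian element are counted by Schur's product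
formula, because both sides satisfy the recursion over removable corners, which for the product is a
case of Lagrange interpolation. The two products differ by the factor `(n² - 2)(n² - 3)`.
-/

/-! ### Signed permutations and reflections -/

/-- Membership of `w` in `B_m`: `w` is odd and fixes every integer outside `{-m, …, m}`. -/
structure IsSignedPerm (m : ℕ) (w : Equiv.Perm ℤ) : Prop where
  map_neg : ∀ a, w (-a) = -w a
  map_of_lt : ∀ a : ℤ, m < a.natAbs → w a = a

namespace IsSignedPerm

variable {n m : ℕ} {v w : Equiv.Perm ℤ}

lemma one (m : ℕ) : IsSignedPerm m 1 := ⟨by simp, by simp⟩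

lemma inv (hw : IsSignedPerm m w) : IsSignedPerm m w⁻¹ where
  map_neg a := w.injective (by rw [hw.map_neg]; simp)
  map_of_lt a ha := w.injective (by rw [hw.map_of_lt a ha]; simp)

lemma mul (hw : IsSignedPerm m w) (hv : IsSignedPerm m v) : IsSignedPerm m (w * v) where
  map_neg a := by simp [hw.map_neg, hv.map_neg]
  map_of_lt a ha := by simp [hw.map_of_lt a ha, hv.map_of_lt a ha]

lemma mono (hw : IsSignedPerm n w) (hnm : n ≤ m) : IsSignedPerm m w :=
  ⟨hw.map_neg, fun a ha ↦ hw.map_of_lt a (hnm.trans_lt ha)⟩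

lemma map_zero (hw : IsSignedPerm m w) : w 0 = 0 := by
  have := hw.map_neg 0
  rw [neg_zero] at this
  omega

lemma map_ne_zero (hw : IsSignedPerm m w) {a : ℤ} (ha : a ≠ 0) : w a ≠ 0 := fun h ↦
  ha (w.injective (h.trans hw.map_zero.symm))

lemma natAbs_map_le (hw : IsSignedPerm m w) {a : ℤ} (ha : a.natAbs ≤ m) : (w a).natAbs ≤ m := by
  by_contra! h
  rw [w.injective (hw.map_of_lt _ h)] at h
  omega

end IsSignedPerm

/-- The reflection of `B_m` exchanging `x` with `y` and `-x` with `-y`, for nonzero `x` and `y`.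
When `x = -y` the two transpositions coincide, and only one of them is applied. -/
def signedSwap (x y : ℤ) : Equiv.Perm ℤ :=
  if x = -y then Equiv.swap x y else Equiv.swap x y * Equiv.swap (-x) (-y)

section SignedSwap

variable {m : ℕ} {x y : ℤ}

lemma signedSwap_apply (hx : x ≠ 0) (hy : y ≠ 0) (b : ℤ) :
    signedSwap x y b = if b = x then y else if b = y then x else if b = -x then -y
      else if b = -y then -x else b := by
  unfold signedSwap
  split_ifs <;> simp only [Equiv.Perm.mul_apply, Equiv.swap_apply_def] <;> split_ifs <;> omega

lemma signedSwap_apply_left (hx : x ≠ 0) (hy : y ≠ 0) : signedSwap x y x = y := by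
  simp [signedSwap_apply hx hy]

lemma signedSwap_apply_right (hx : x ≠ 0) (hy : y ≠ 0) : signedSwap x y y = x := by
  rw [signedSwap_apply hx hy]
  split_ifs <;> omega

lemma signedSwap_apply_of_natAbs_ne (hx : x ≠ 0) (hy : y ≠ 0) {b : ℤ} (hbx : b.natAbs ≠ x.natAbs)
    (hby : b.natAbs ≠ y.natAbs) : signedSwap x y b = b := by
  rw [signedSwap_apply hx hy]
  split_ifs <;> omega

lemma signedSwap_comm (hx : x ≠ 0) (hy : y ≠ 0) : signedSwap y x = signedSwap x y := by
  ext b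
  rw [signedSwap_apply hx hy, signedSwap_apply hy hx]
  split_ifs <;> omega

lemma signedSwap_neg (hx : x ≠ 0) (hy : y ≠ 0) : signedSwap (-y) (-x) = signedSwap x y := by
  ext b
  rw [signedSwap_apply hx hy, signedSwap_apply (neg_ne_zero.2 hy) (neg_ne_zero.2 hx)]
  split_ifs <;> omega

lemma signedSwap_mul_self (hx : x ≠ 0) (hy : y ≠ 0) : signedSwap x y * signedSwap x y = 1 := by
  ext b
  simp only [Equiv.Perm.mul_apply, Equiv.Perm.one_apply, signedSwap_apply hx hy]
  split_ifs <;> omega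

lemma isSignedPerm_signedSwap (hx : x ≠ 0) (hy : y ≠ 0) (hxm : x.natAbs ≤ m)
    (hym : y.natAbs ≤ m) : IsSignedPerm m (signedSwap x y) where
  map_neg a := by
    rw [signedSwap_apply hx hy, signedSwap_apply hx hy]
    split_ifs <;> omega
  map_of_lt a ha := signedSwap_apply_of_natAbs_ne hx hy (by omega) (by omega)

lemma IsSignedPerm.mul_signedSwap {w : Equiv.Perm ℤ} (hw : IsSignedPerm m w) (hx : x ≠ 0)
    (hy : y ≠ 0) : w * signedSwap x y = signedSwap (w x) (w y) * w := by
  ext b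
  simp only [Equiv.Perm.mul_apply, signedSwap_apply hx hy,
    signedSwap_apply (hw.map_ne_zero hx) (hw.map_ne_zero hy), ← hw.map_neg,
    EmbeddingLike.apply_eq_iff_eq]
  split_ifs <;> rfl

/-- The coefficient `c` in `signedSwap x y b = b - c * (y - x)`, that is, the pairing of the
coordinate `b` with the coroot of the reflection. -/
def rootCoeff (x y b : ℤ) : ℤ := if b = y ∨ b = -x then 1 else if b = x ∨ b = -y then -1 else 0

lemma map_signedSwap_apply (hx : x ≠ 0) (hy : y ≠ 0) {f : ℤ → ℤ} (hf : ∀ a, f (-a) = -f a)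
    (b : ℤ) : f (signedSwap x y b) = f b - rootCoeff x y b * (f y - f x) := by
  have hfx := hf x
  have hfy := hf y
  rw [signedSwap_apply hx hy, rootCoeff]
  split_ifs <;> grind

lemma signedSwap_eq_of_apply_ne (hx : x ≠ 0) (hy : y ≠ 0) {b : ℤ} (hb : signedSwap x y b ≠ b) :
    signedSwap (signedSwap x y b) b = signedSwap x y := by
  rw [signedSwap_apply hx hy] at hb ⊢
  split_ifs at hb ⊢ with h1 h2 h3 h4
  · rw [h1, signedSwap_comm hx hy]
  · rw [h2]
  · rw [h3, signedSwap_neg hx hy]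
  · rw [h4, signedSwap_neg hy hx, signedSwap_comm hx hy]
  · exact absurd rfl hb

end SignedSwap

section Inversions

/-- The inversions of `w ∈ B_m`: pairs `a < b` in `{-m, …, m} \ {0}` with `w b < w a`, where of the
two pairs `(a, b)` and `(-b, -a)` only the one with `0 ≤ a + b` is recorded. -/
noncomputable def inversions (m : ℕ) (w : Equiv.Perm ℤ) : Finset (ℤ × ℤ) :=
  (Finset.Icc (-m : ℤ) m ×ˢ Finset.Icc (-m : ℤ) m).filter
    fun d ↦ d.1 ≠ 0 ∧ -d.2 ≤ d.1 ∧ d.1 < d.2 ∧ w d.2 < w d.1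

/-- The Coxeter length of `w ∈ B_m`, computed as its number of inversions. -/
noncomputable def invNum (m : ℕ) (w : Equiv.Perm ℤ) : ℕ := (inversions m w).card

/-- The member with nonnegative sum of the pair of pairs `(a, b)`, `(-b, -a)`. -/
def posRep (d : ℤ × ℤ) : ℤ × ℤ := if 0 ≤ d.1 + d.2 then d else (-d.2, -d.1)

/-- The inversions of the reflection `t` that are inversions of `w * t` but not of `w`. -/
noncomputable def gainedInversions (m : ℕ) (w t : Equiv.Perm ℤ) : Finset (ℤ × ℤ) :=
  (inversions m t).filter fun d ↦ w d.1 < w d.2 ∧ w (t d.2) < w (t d.1)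

variable {m : ℕ} {t w : Equiv.Perm ℤ} {x y : ℤ}

lemma mem_inversions {d : ℤ × ℤ} : d ∈ inversions m w ↔
    d.1 ≠ 0 ∧ -d.2 ≤ d.1 ∧ d.1 < d.2 ∧ d.2 ≤ m ∧ w d.2 < w d.1 := by
  simp only [inversions, Finset.mem_filter, Finset.mem_product, Finset.mem_Icc]
  omega

lemma posRep_mem_inversions (hw : IsSignedPerm m w) {a b : ℤ} (ha : a ≠ 0) (hb : b ≠ 0)
    (ham : a.natAbs ≤ m) (hbm : b.natAbs ≤ m) (hab : a < b) (hwab : w b < w a) :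
    posRep (a, b) ∈ inversions m w := by
  rw [mem_inversions, posRep]
  split_ifs with h <;> simp only [hw.map_neg] at h ⊢ <;> omega

lemma card_inversions_mul_sdiff (ht : IsSignedPerm m t) (htt : ∀ a, t (t a) = a)
    (hw : IsSignedPerm m w) :
    (inversions m (w * t) \ inversions m t).card = (inversions m w \ inversions m t).card := by
  have maps : ∀ u, IsSignedPerm m u → ∀ d ∈ inversions m u \ inversions m t,
      posRep (t d.1, t d.2) ∈ inversions m (u * t) \ inversions m t := by
    intro u hu d hd
    simp only [Finset.mem_sdiff, mem_inversions] at hd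
    obtain ⟨⟨h0, hle, hlt, hm, hinv⟩, hnt⟩ := hd
    have hne : t d.1 ≠ t d.2 := fun h ↦ hlt.ne (t.injective h)
    refine Finset.mem_sdiff.2 ⟨posRep_mem_inversions (hu.mul ht) (ht.map_ne_zero h0)
      (ht.map_ne_zero (by omega)) (ht.natAbs_map_le (by omega)) (ht.natAbs_map_le (by omega))
      (by omega) (by simpa only [Equiv.Perm.mul_apply, htt] using hinv), ?_⟩
    rw [mem_inversions, posRep]
    split_ifs <;> simp only [ht.map_neg, htt] <;> omega
  have inv : ∀ u, ∀ d ∈ inversions m u \ inversions m t,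
      posRep (t (posRep (t d.1, t d.2)).1, t (posRep (t d.1, t d.2)).2) = d := by
    intro u d hd
    have := mem_inversions.1 (Finset.mem_sdiff.1 hd).1
    rw [posRep, posRep]
    ext <;> split_ifs <;> simp only [ht.map_neg, htt] at * <;> omega
  have hwtt : w * t * t = w := Equiv.ext fun a ↦ by simp [htt]
  refine Finset.card_nbij' (fun d ↦ posRep (t d.1, t d.2)) (fun d ↦ posRep (t d.1, t d.2))
    ?_ (maps w hw) (inv _) (inv _)
  simpa only [hwtt] using! maps (w * t) (hw.mul ht)

lemma map_signedSwap_lt_of_lt (hw : IsSignedPerm m w) (hx : x ≠ 0) (hy : y ≠ 0) (hxy : x < y)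
    (hwxy : w x < w y) {a b : ℤ} (hab : a < b) (hswap : signedSwap x y b < signedSwap x y a)
    (hwab : w b < w a) : w (signedSwap x y b) < w (signedSwap x y a) := by
  have id_swap := map_signedSwap_apply hx hy (f := id) fun _ ↦ rfl
  simp only [id] at id_swap
  rw [id_swap, id_swap] at hswap
  rw [map_signedSwap_apply hx hy hw.map_neg, map_signedSwap_apply hx hy hw.map_neg]
  have hcoeff : 0 < rootCoeff x y b - rootCoeff x y a := by
    by_contra! h
    nlinarith
  nlinarith [mul_pos hcoeff (sub_pos.2 hwxy)]

lemma invNum_mul_signedSwap (hw : IsSignedPerm m w) (hx : x ≠ 0) (hy : y ≠ 0)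
    (hxm : x.natAbs ≤ m) (hym : y.natAbs ≤ m) (hxy : x < y) (hwxy : w x < w y) :
    invNum m (w * signedSwap x y)
      = invNum m w + (gainedInversions m w (signedSwap x y)).card := by
  have hinter : inversions m (w * signedSwap x y) ∩ inversions m (signedSwap x y)
      = (inversions m w ∩ inversions m (signedSwap x y))
        ∪ gainedInversions m w (signedSwap x y) := by
    ext d
    have hkey := map_signedSwap_lt_of_lt hw hx hy hxy hwxy (a := d.1) (b := d.2)
    have hne : d.1 < d.2 → w d.1 ≠ w d.2 := fun h h' ↦ h.ne (w.injective h')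
    simp only [gainedInversions, Finset.mem_inter, Finset.mem_union, Finset.mem_filter,
      mem_inversions, Equiv.Perm.mul_apply]
    omega
  have hdisj : Disjoint (inversions m w ∩ inversions m (signedSwap x y))
      (gainedInversions m w (signedSwap x y)) := by
    rw [Finset.disjoint_left]
    intro d hd hgain
    exact (mem_inversions.1 (Finset.mem_inter.1 hd).1).2.2.2.2.not_gt
      (Finset.mem_filter.1 hgain).2.1
  have hsdiff := card_inversions_mul_sdiff (isSignedPerm_signedSwap hx hy hxm hym)
    (fun a ↦ DFunLike.congr_fun (signedSwap_mul_self hx hy) a) hw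
  rw [invNum, ← Finset.card_sdiff_add_card_inter _ (inversions m (signedSwap x y)), hsdiff, hinter,
    Finset.card_union_of_disjoint hdisj, ← add_assoc, Finset.card_sdiff_add_card_inter, invNum]

lemma posRep_mem_gainedInversions (ht : IsSignedPerm m t) (hw : IsSignedPerm m w) {a b : ℤ}
    (ha : a ≠ 0) (hb : b ≠ 0) (ham : a.natAbs ≤ m) (hbm : b.natAbs ≤ m) (hab : a < b)
    (htab : t b < t a) (hwab : w a < w b) (hwtab : w (t b) < w (t a)) :
    posRep (a, b) ∈ gainedInversions m w t := by
  refine Finset.mem_filter.2 ⟨posRep_mem_inversions ht ha hb ham hbm hab htab, ?_⟩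
  rw [posRep]
  split_ifs <;> simp only [ht.map_neg, hw.map_neg] <;> omega

lemma posRep_root_mem_gainedInversions (hw : IsSignedPerm m w) (hx : x ≠ 0) (hy : y ≠ 0)
    (hxm : x.natAbs ≤ m) (hym : y.natAbs ≤ m) (hxy : x < y) (hwxy : w x < w y) :
    posRep (x, y) ∈ gainedInversions m w (signedSwap x y) :=
  posRep_mem_gainedInversions (isSignedPerm_signedSwap hx hy hxm hym) hw hx hy hxm hym hxy
    (by rwa [signedSwap_apply_left hx hy, signedSwap_apply_right hx hy]) hwxy
    (by rwa [signedSwap_apply_left hx hy, signedSwap_apply_right hx hy])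

lemma invNum_mul_signedSwap_eq_add_one (hw : IsSignedPerm m w) (hx : x ≠ 0) (hy : y ≠ 0)
    (hxm : x.natAbs ≤ m) (hym : y.natAbs ≤ m) (hxy : x < y) (hwxy : w x < w y)
    (hgain : ∀ d ∈ gainedInversions m w (signedSwap x y), d = (x, y) ∨ d = (-y, -x)) :
    invNum m (w * signedSwap x y) = invNum m w + 1 := by
  rw [invNum_mul_signedSwap hw hx hy hxm hym hxy hwxy, add_right_inj, Finset.card_eq_one]
  refine ⟨posRep (x, y), Finset.eq_singleton_iff_unique_mem.2
    ⟨posRep_root_mem_gainedInversions hw hx hy hxm hym hxy hwxy, fun d hd ↦ ?_⟩⟩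
  have hpos := (mem_inversions.1 (Finset.mem_filter.1 hd).1).2.1
  rcases hgain d hd with rfl | rfl <;> rw [posRep] <;> ext <;> split_ifs <;> grind

lemma invNum_lt_mul_signedSwap (hw : IsSignedPerm m w) (hx : x ≠ 0) (hy : y ≠ 0)
    (hxm : x.natAbs ≤ m) (hym : y.natAbs ≤ m) (hxy : x < y) (hwxy : w x < w y) :
    invNum m w < invNum m (w * signedSwap x y) := by
  rw [invNum_mul_signedSwap hw hx hy hxm hym hxy hwxy]
  have := Finset.card_pos.2
    ⟨_, posRep_root_mem_gainedInversions hw hx hy hxm hym hxy hwxy⟩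
  omega

lemma invNum_mul_signedSwap_lt (hw : IsSignedPerm m w) (hx : x ≠ 0) (hy : y ≠ 0)
    (hxm : x.natAbs ≤ m) (hym : y.natAbs ≤ m) (hxy : x < y) (hwxy : w y < w x) :
    invNum m (w * signedSwap x y) < invNum m w := by
  have := invNum_lt_mul_signedSwap (hw.mul (isSignedPerm_signedSwap hx hy hxm hym)) hx hy hxm hym
    hxy (by simpa only [Equiv.Perm.mul_apply, signedSwap_apply_left hx hy,
      signedSwap_apply_right hx hy] using hwxy)
  rwa [mul_assoc, signedSwap_mul_self hx hy, mul_one] at this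

lemma invNum_lt_mul_signedSwap_iff (hw : IsSignedPerm m w) (hx : x ≠ 0) (hy : y ≠ 0)
    (hxm : x.natAbs ≤ m) (hym : y.natAbs ≤ m) (hxy : x ≠ y) :
    invNum m w < invNum m (w * signedSwap x y) ↔ (x < y ↔ w x < w y) := by
  wlog h : x < y generalizing x y
  · rw [← signedSwap_comm hx hy, this hy hx hym hxm hxy.symm (by omega)]
    have : w x ≠ w y := fun h ↦ hxy (w.injective h)
    omega
  rcases lt_or_gt_of_ne fun h' ↦ hxy (w.injective h') with h' | h'
  · simp [h, h', invNum_lt_mul_signedSwap hw hx hy hxm hym h h']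
  · simp [h, h'.not_gt, (invNum_mul_signedSwap_lt hw hx hy hxm hym h h').le]

lemma IsSignedPerm.signedSwap_cases (hw : IsSignedPerm m w) (hx : x ≠ 0) (hy : y ≠ 0) (b : ℤ) :
    (b = x ∧ signedSwap x y b = y ∧ w b = w x ∧ w (signedSwap x y b) = w y) ∨
    (b = y ∧ signedSwap x y b = x ∧ w b = w y ∧ w (signedSwap x y b) = w x) ∨
    (b = -x ∧ signedSwap x y b = -y ∧ w b = -w x ∧ w (signedSwap x y b) = -w y) ∨
    (b = -y ∧ signedSwap x y b = -x ∧ w b = -w y ∧ w (signedSwap x y b) = -w x) ∨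
    (b ≠ x ∧ b ≠ y ∧ b ≠ -x ∧ b ≠ -y ∧ signedSwap x y b = b ∧
      w (signedSwap x y b) = w b) := by
  rw [signedSwap_apply hx hy]
  split_ifs with h1 h2 h3 h4 <;> simp_all [hw.map_neg]

lemma invNum_mul_signedSwap_of_forall_not_between (hw : IsSignedPerm m w) (hx : x ≠ 0) (hy : y ≠ 0)
    (hxm : x.natAbs ≤ m) (hym : y.natAbs ≤ m) (hxy : x < y) (hwxy : w x < w y)
    (hbetween : ∀ c, ¬(x < c ∧ c < y ∧ w x < w c ∧ w c < w y)) (hsign : 0 < x ∨ w y < 0) :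
    invNum m (w * signedSwap x y) = invNum m w + 1 := by
  refine invNum_mul_signedSwap_eq_add_one hw hx hy hxm hym hxy hwxy fun ⟨a, b⟩ hd ↦ ?_
  obtain ⟨hinv, hlt, hgain⟩ := Finset.mem_filter.1 hd
  obtain ⟨-, -, hab, -, hswap⟩ := mem_inversions.1 hinv
  have ha := hbetween a
  have hb := hbetween b
  have hna := hbetween (-a)
  have hnb := hbetween (-b)
  rw [hw.map_neg] at hna hnb
  simp only [Prod.mk.injEq] at hlt hab hswap hgain ⊢
  rcases hw.signedSwap_cases hx hy a with ha' | ha' | ha' | ha' | ha' <;>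
    rcases hw.signedSwap_cases hx hy b with hb' | hb' | hb' | hb' | hb' <;> omega

lemma invNum_mul_signedSwap_ne_of_between (hw : IsSignedPerm m w) (hx : x ≠ 0) (hy : y ≠ 0)
    (hxm : x.natAbs ≤ m) (hym : y.natAbs ≤ m) {c : ℤ} (hc : c ≠ 0) (hcx : c ≠ -x) (hcy : c ≠ -y)
    (hxc : x < c) (hcy' : c < y) (hwxc : w x < w c) (hwcy : w c < w y) :
    invNum m (w * signedSwap x y) ≠ invNum m w + 1 := by
  have hxy : x < y := hxc.trans hcy'
  have hwxy : w x < w y := hwxc.trans hwcy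
  have hfix : signedSwap x y c = c := by
    rw [signedSwap_apply hx hy]
    split_ifs <;> omega
  have hleft := signedSwap_apply_left hx hy
  have hgain : posRep (x, c) ∈ gainedInversions m w (signedSwap x y) :=
    posRep_mem_gainedInversions (isSignedPerm_signedSwap hx hy hxm hym) hw hx hc hxm (by omega) hxc
      (by rwa [hleft, hfix]) hwxc (by rwa [hleft, hfix])
  have hne : posRep (x, c) ≠ posRep (x, y) := by
    simp only [posRep]
    split_ifs <;> simp only [ne_eq, Prod.mk.injEq] <;> omega
  rw [invNum_mul_signedSwap hw hx hy hxm hym hxy hwxy]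
  have := Finset.one_lt_card.2
    ⟨_, hgain, _, posRep_root_mem_gainedInversions hw hx hy hxm hym hxy hwxy, hne⟩
  omega

end Inversions

/-! ### Simple reflections and reduced words -/

section SimpleReflections

/-- The smaller root coordinate of the simple reflection `sB i`, whose larger one is `i + 1`:
it is `i` for `i ≥ 1`, and `-1` for `i = 0`. -/
def lowEnd (i : ℕ) : ℤ := if i = 0 then -1 else i

/-- `i` is a left descent of `w`, that is, `sB i * w` is shorter than `w`. For `i = 0` the
condition reads `w⁻¹ 1 < 0`, as `w⁻¹ 0 = 0`. -/
def IsLeftDescent (w : Equiv.Perm ℤ) (i : ℕ) : Prop := w⁻¹ (i + 1) < w⁻¹ i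

variable {m i : ℕ} {w : Equiv.Perm ℤ}

lemma lowEnd_ne_zero (i : ℕ) : lowEnd i ≠ 0 := by
  unfold lowEnd
  split_ifs <;> omega

lemma lowEnd_lt (i : ℕ) : lowEnd i < i + 1 := by
  unfold lowEnd
  split_ifs <;> omega

lemma natAbs_lowEnd_le (hi : i < m) : (lowEnd i).natAbs ≤ m := by
  unfold lowEnd
  split_ifs <;> omega

lemma succ_cast_ne_zero (i : ℕ) : (i : ℤ) + 1 ≠ 0 := by omega

lemma sB_eq_signedSwap (i : ℕ) : sB i = signedSwap (lowEnd i) (i + 1) := by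
  unfold sB signedSwap lowEnd
  split_ifs with hi <;> first | omega | simp [hi, Equiv.swap_comm]

lemma sB_mul_self (i : ℕ) : sB i * sB i = 1 := by
  rw [sB_eq_signedSwap]
  exact signedSwap_mul_self (lowEnd_ne_zero i) (succ_cast_ne_zero i)

lemma sB_mul_sB_mul (i : ℕ) (w : Equiv.Perm ℤ) : sB i * (sB i * w) = w := by
  rw [← mul_assoc, sB_mul_self, one_mul]

lemma inv_sB (i : ℕ) : (sB i)⁻¹ = sB i := inv_eq_of_mul_eq_one_left (sB_mul_self i)

lemma isSignedPerm_sB (hi : i < m) : IsSignedPerm m (sB i) := by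
  rw [sB_eq_signedSwap]
  exact isSignedPerm_signedSwap (lowEnd_ne_zero i) (succ_cast_ne_zero i) (natAbs_lowEnd_le hi)
    (by omega)

lemma sB_apply_of_lt {a : ℤ} (ha : i + 1 < a.natAbs) : sB i a = a :=
  (isSignedPerm_sB i.lt_succ_self).map_of_lt a ha

lemma eq_root_of_sB_lt {a b : ℤ} (ha : a ≠ 0) (hb : b ≠ 0) (hab : a < b)
    (h : sB i b < sB i a) :
    (a = lowEnd i ∧ b = i + 1) ∨ (a = -(i + 1) ∧ b = -lowEnd i) := by
  rw [sB_eq_signedSwap, signedSwap_apply (lowEnd_ne_zero i) (succ_cast_ne_zero i),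
    signedSwap_apply (lowEnd_ne_zero i) (succ_cast_ne_zero i)] at h
  unfold lowEnd at *
  split_ifs at h <;> split_ifs <;> omega

lemma sB_lt_sB_iff {a b : ℤ} (ha : a ≠ 0) (hb : b ≠ 0) (hab : sB i ≠ signedSwap a b) :
    sB i a < sB i b ↔ a < b := by
  have flip {a b : ℤ} (ha : a ≠ 0) (hb : b ≠ 0) (h : a < b) (hs : sB i b < sB i a) :
      sB i = signedSwap a b := by
    rw [sB_eq_signedSwap]
    rcases eq_root_of_sB_lt ha hb h hs with ⟨rfl, rfl⟩ | ⟨rfl, rfl⟩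
    · rfl
    · exact (signedSwap_neg (lowEnd_ne_zero i) (succ_cast_ne_zero i)).symm
  have hne : a ≠ b → sB i a ≠ sB i b := (sB i).injective.ne
  refine ⟨fun h ↦ ?_, fun h ↦ ?_⟩ <;> by_contra h'
  · rw [← signedSwap_comm ha hb] at hab
    have : a ≠ b := by grind
    exact hab (flip hb ha (by omega) h)
  · exact hab (flip ha hb h (by have := hne h.ne; omega))

lemma IsSignedPerm.isLeftDescent_iff (hw : IsSignedPerm m w) :
    IsLeftDescent w i ↔ w⁻¹ (i + 1) < w⁻¹ (lowEnd i) := by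
  unfold IsLeftDescent lowEnd
  split_ifs with hi
  · subst hi
    rw [hw.inv.map_neg, Nat.cast_zero, hw.inv.map_zero]
    simp only [zero_add]
    omega
  · rfl

lemma IsSignedPerm.not_isLeftDescent_iff (hw : IsSignedPerm m w) :
    ¬IsLeftDescent w i ↔ w⁻¹ (lowEnd i) < w⁻¹ (i + 1) := by
  have : w⁻¹ (lowEnd i) ≠ w⁻¹ (i + 1) := w⁻¹.injective.ne (lowEnd_lt i).ne
  rw [hw.isLeftDescent_iff]
  omega

lemma IsSignedPerm.sB_mul_eq (hw : IsSignedPerm m w) (i : ℕ) :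
    sB i * w = w * signedSwap (w⁻¹ (lowEnd i)) (w⁻¹ (i + 1)) := by
  rw [hw.mul_signedSwap (hw.inv.map_ne_zero (lowEnd_ne_zero i))
    (hw.inv.map_ne_zero (succ_cast_ne_zero i)), sB_eq_signedSwap]
  simp

lemma IsSignedPerm.isLeftDescent_sB_mul (hw : IsSignedPerm m w) (hi : i < m) :
    IsLeftDescent (sB i * w) i ↔ ¬IsLeftDescent w i := by
  rw [((isSignedPerm_sB hi).mul hw).isLeftDescent_iff, hw.not_isLeftDescent_iff, mul_inv_rev,
    inv_sB, Equiv.Perm.mul_apply, Equiv.Perm.mul_apply, sB_eq_signedSwap,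
    signedSwap_apply_left (lowEnd_ne_zero i) (succ_cast_ne_zero i),
    signedSwap_apply_right (lowEnd_ne_zero i) (succ_cast_ne_zero i)]

lemma invNum_sB_mul_of_not_isLeftDescent (hw : IsSignedPerm m w) (hi : i < m)
    (h : ¬IsLeftDescent w i) : invNum m (sB i * w) = invNum m w + 1 := by
  have hmul := hw.sB_mul_eq i
  rw [hmul]
  refine invNum_mul_signedSwap_eq_add_one hw (hw.inv.map_ne_zero (lowEnd_ne_zero i))
    (hw.inv.map_ne_zero (succ_cast_ne_zero i)) (hw.inv.natAbs_map_le (natAbs_lowEnd_le hi))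
    (hw.inv.natAbs_map_le (by omega)) (hw.not_isLeftDescent_iff.1 h)
    (by simpa using lowEnd_lt i) fun d hd ↦ ?_
  obtain ⟨hinv, hlt, hgain⟩ := Finset.mem_filter.1 hd
  obtain ⟨hd1, hd12, hd12', -⟩ := mem_inversions.1 hinv
  rw [← Equiv.Perm.mul_apply, ← Equiv.Perm.mul_apply, ← hmul] at hgain
  rcases eq_root_of_sB_lt (hw.map_ne_zero hd1) (hw.map_ne_zero (by omega)) hlt hgain with
    ⟨h1, h2⟩ | ⟨h1, h2⟩
  · left
    rw [← h1, ← h2]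
    simp
  · right
    rw [← hw.inv.map_neg, ← hw.inv.map_neg, ← h1, ← h2]
    simp

lemma invNum_sB_mul_of_isLeftDescent (hw : IsSignedPerm m w) (hi : i < m)
    (h : IsLeftDescent w i) : invNum m (sB i * w) + 1 = invNum m w := by
  rw [← invNum_sB_mul_of_not_isLeftDescent ((isSignedPerm_sB hi).mul hw) hi
    (by rwa [hw.isLeftDescent_sB_mul hi, not_not]), sB_mul_sB_mul]

lemma not_isLeftDescent_of_le (hw : IsSignedPerm m w) (hi : m ≤ i) : ¬IsLeftDescent w i := by
  rw [hw.not_isLeftDescent_iff, hw.inv.map_of_lt (i + 1) (by omega)]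
  by_contra! h
  have hle : (lowEnd i).natAbs ≤ i + 1 := natAbs_lowEnd_le i.lt_succ_self
  by_cases him : (lowEnd i).natAbs ≤ m
  · have := hw.inv.natAbs_map_le him
    omega
  · rw [hw.inv.map_of_lt _ (by omega)] at h
    exact (lowEnd_lt i).not_ge h

lemma eq_one_of_forall_not_isLeftDescent (hw : IsSignedPerm m w)
    (h : ∀ i < m, ¬IsLeftDescent w i) : w = 1 := by
  have hstep (i : ℕ) : w⁻¹ i < w⁻¹ (i + 1) := by
    have hdesc : ¬IsLeftDescent w i := by
      by_cases hi : i < m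
      · exact h i hi
      · exact not_isLeftDescent_of_le hw (by omega)
    exact lt_of_le_of_ne (not_lt.1 hdesc) (w⁻¹.injective.ne (by omega))
  have hmono : Monotone fun a ↦ w⁻¹ a - a := by
    refine monotone_int_of_le_succ fun a ↦ ?_
    rcases le_or_gt 0 a with ha | ha
    · lift a to ℕ using ha
      have := hstep a
      omega
    · have := hstep (-a - 1).toNat
      rw [Int.toNat_of_nonneg (by omega), sub_add_cancel, hw.inv.map_neg,
        show -a - 1 = -(a + 1) by ring, hw.inv.map_neg] at this
      omega
  refine inv_eq_one.1 (Equiv.ext fun a ↦ ?_)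
  have hlow := hmono (show -(max a.natAbs m + 1 : ℤ) ≤ a by omega)
  have hhigh := hmono (show a ≤ (max a.natAbs m + 1 : ℤ) by omega)
  simp only [hw.inv.map_of_lt (-(max a.natAbs m + 1 : ℤ)) (by omega),
    hw.inv.map_of_lt (max a.natAbs m + 1 : ℤ) (by omega)] at hlow hhigh
  rw [Equiv.Perm.one_apply]
  omega

end SimpleReflections

section ReducedWords

variable {m n i : ℕ} {w : Equiv.Perm ℤ} {l : List ℕ}

instance (w : Equiv.Perm ℤ) (i : ℕ) : Decidable (IsLeftDescent w i) := Int.decLt _ _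

lemma wordProd_cons (i : ℕ) (l : List ℕ) : wordProd (i :: l) = sB i * wordProd l := by
  simp [wordProd]

lemma isSignedPerm_wordProd (hl : ∀ i ∈ l, i < m) : IsSignedPerm m (wordProd l) := by
  induction l with
  | nil => exact .one m
  | cons i l ih =>
    rw [List.forall_mem_cons] at hl
    rw [wordProd_cons]
    exact (isSignedPerm_sB hl.1).mul (ih hl.2)

lemma invNum_one (m : ℕ) : invNum m 1 = 0 := by
  rw [invNum, Finset.card_eq_zero, Finset.eq_empty_iff_forall_notMem]
  intro d
  rw [mem_inversions]
  simp only [Equiv.Perm.one_apply]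
  omega

lemma invNum_wordProd_le (hl : ∀ i ∈ l, i < m) : invNum m (wordProd l) ≤ l.length := by
  induction l with
  | nil => exact (invNum_one m).le
  | cons i l ih =>
    rw [List.forall_mem_cons] at hl
    have hle := ih hl.2
    have hprod := isSignedPerm_wordProd hl.2
    rw [wordProd_cons, List.length_cons]
    by_cases h : IsLeftDescent (wordProd l) i
    · have := invNum_sB_mul_of_isLeftDescent hprod hl.1 h
      omega
    · have := invNum_sB_mul_of_not_isLeftDescent hprod hl.1 h
      omega

lemma exists_wordProd_eq (hw : IsSignedPerm m w) :
    ∃ l : List ℕ, (∀ i ∈ l, i < m) ∧ wordProd l = w ∧ l.length = invNum m w := by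
  induction h : invNum m w generalizing w with
  | zero =>
    refine ⟨[], by simp, (eq_one_of_forall_not_isLeftDescent hw fun i hi hdesc ↦ ?_).symm, rfl⟩
    have := invNum_sB_mul_of_isLeftDescent hw hi hdesc
    omega
  | succ k ih =>
    obtain ⟨i, hi, hdesc⟩ : ∃ i < m, IsLeftDescent w i := by
      by_contra! hno
      rw [eq_one_of_forall_not_isLeftDescent hw hno, invNum_one] at h
      omega
    have hlen := invNum_sB_mul_of_isLeftDescent hw hi hdesc
    obtain ⟨l, hl, hprod, hlength⟩ := ih ((isSignedPerm_sB hi).mul hw) (by omega)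
    exact ⟨i :: l, List.forall_mem_cons.2 ⟨hi, hl⟩, by rw [wordProd_cons, hprod, sB_mul_sB_mul],
      by rw [List.length_cons, hlength]⟩

lemma IsSignedPerm.mem_RSet_iff (hw : IsSignedPerm m w) :
    l ∈ RSet m w ↔ (∀ i ∈ l, i < m) ∧ wordProd l = w ∧ l.length = invNum m w := by
  refine ⟨fun ⟨hl, hprod, hmin⟩ ↦ ⟨hl, hprod, ?_⟩,
    fun ⟨hl, hprod, hlen⟩ ↦ ⟨hl, hprod, fun l' hl' hprod' ↦ ?_⟩⟩
  · obtain ⟨l', hl', hprod', hlen'⟩ := exists_wordProd_eq hw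
    have := hmin l' hl' hprod'
    have := hprod ▸ invNum_wordProd_le hl
    omega
  · rw [hlen, ← hprod']
    exact invNum_wordProd_le hl'

lemma IsSignedPerm.cons_mem_RSet_iff (hw : IsSignedPerm m w) :
    i :: l ∈ RSet m w ↔ i < m ∧ IsLeftDescent w i ∧ l ∈ RSet m (sB i * w) := by
  rw [hw.mem_RSet_iff, List.forall_mem_cons, wordProd_cons, List.length_cons]
  constructor
  · rintro ⟨⟨hi, hl⟩, hprod, hlen⟩
    have hprod' : wordProd l = sB i * w := by rw [← hprod, sB_mul_sB_mul]
    have hle := hprod' ▸ invNum_wordProd_le hl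
    have hdesc : IsLeftDescent w i := by
      by_contra h
      have := invNum_sB_mul_of_not_isLeftDescent hw hi h
      omega
    have := invNum_sB_mul_of_isLeftDescent hw hi hdesc
    exact ⟨hi, hdesc, ((isSignedPerm_sB hi).mul hw).mem_RSet_iff.2 ⟨hl, hprod', by omega⟩⟩
  · rintro ⟨hi, hdesc, hl⟩
    obtain ⟨hl, hprod, hlen⟩ := ((isSignedPerm_sB hi).mul hw).mem_RSet_iff.1 hl
    have := invNum_sB_mul_of_isLeftDescent hw hi hdesc
    exact ⟨⟨hi, hl⟩, by rw [hprod, sB_mul_sB_mul], by omega⟩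

lemma nil_mem_RSet_iff : [] ∈ RSet m w ↔ w = 1 :=
  ⟨fun h ↦ h.2.1.symm, fun h ↦ ⟨by simp, h.symm, fun _ _ _ ↦ Nat.zero_le _⟩⟩

lemma RSet_one (m : ℕ) : RSet m 1 = {[]} := by
  ext l
  cases l with
  | nil => simp [nil_mem_RSet_iff]
  | cons i l => simp [(IsSignedPerm.one m).mem_RSet_iff, invNum_one]

lemma RSet_eq_of_le (hw : IsSignedPerm n w) (hnm : n ≤ m) : RSet m w = RSet n w := by
  ext l
  induction l generalizing w with
  | nil => rw [nil_mem_RSet_iff, nil_mem_RSet_iff]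
  | cons i l ih =>
    rw [(hw.mono hnm).cons_mem_RSet_iff, hw.cons_mem_RSet_iff]
    by_cases hi : i < n
    · rw [ih ((isSignedPerm_sB hi).mul hw)]
      simp only [hi, hi.trans_le hnm]
    · simp [not_isLeftDescent_of_le hw (not_lt.1 hi)]

lemma IsSignedPerm.finite_RSet (hw : IsSignedPerm m w) : Finite (RSet m w) := by
  refine Set.Finite.subset
    ((List.finite_length_eq (Fin m) (invNum m w)).image (List.map Fin.val)) fun l hl ↦ ?_
  obtain ⟨hl, -, hlen⟩ := hw.mem_RSet_iff.1 hl
  lift l to List (Fin m) using hl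
  exact ⟨l, by simpa using hlen, rfl⟩

lemma card_RSet_eq_sum (hw : IsSignedPerm m w) (hne : w ≠ 1) :
    Nat.card (RSet m w) =
      ∑ i ∈ Finset.range m with IsLeftDescent w i, Nat.card (RSet m (sB i * w)) := by
  have hmem (i : {i // i ∈ Finset.filter (IsLeftDescent w) (Finset.range m)}) :
      i.1 < m ∧ IsLeftDescent w i :=
    (Finset.mem_filter.1 i.2).imp_left Finset.mem_range.1
  have (i : {i // i ∈ Finset.filter (IsLeftDescent w) (Finset.range m)}) :
      Finite (RSet m (sB i * w)) := ((isSignedPerm_sB (hmem i).1).mul hw).finite_RSet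
  rw [← Finset.sum_coe_sort, ← Nat.card_sigma]
  refine (Nat.card_congr (Equiv.ofBijective (fun p ↦ ⟨p.1 :: p.2.1,
    hw.cons_mem_RSet_iff.2 ⟨(hmem p.1).1, (hmem p.1).2, p.2.2⟩⟩) ⟨?_, ?_⟩)).symm
  · rintro ⟨⟨i, hi⟩, l, hl⟩ ⟨⟨j, hj⟩, l', hl'⟩ h
    obtain ⟨rfl, rfl⟩ := List.cons_eq_cons.1 (congrArg Subtype.val h)
    rfl
  · rintro ⟨_ | ⟨i, l⟩, hl⟩
    · exact absurd (nil_mem_RSet_iff.1 hl) hne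
    · obtain ⟨hi, hdesc, hl⟩ := hw.cons_mem_RSet_iff.1 hl
      exact ⟨⟨⟨i, Finset.mem_filter.2 ⟨Finset.mem_range.2 hi, hdesc⟩⟩, l, hl⟩, rfl⟩

end ReducedWords

/-! ### The transition recurrence -/

section CoverIdentity

variable {m i : ℕ} {w : Equiv.Perm ℤ} {r x : ℤ}

lemma sB_mul_mul_signedSwap_eq_iff (hw : IsSignedPerm m w) (hx : x ≠ 0) (hr : r ≠ 0)
    (hxr : x ≠ r) : sB i * (w * signedSwap x r) = w ↔ w x = sB i (w r) := by
  have hwxr : w x ≠ w r := w.injective.ne hxr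
  constructor
  · intro h
    have := DFunLike.congr_fun h r
    rw [Equiv.Perm.mul_apply, Equiv.Perm.mul_apply, signedSwap_apply_right hx hr] at this
    rw [← this, ← Equiv.Perm.mul_apply, sB_mul_self, Equiv.Perm.one_apply]
  · intro h
    rw [hw.mul_signedSwap hx hr, h, sB_eq_signedSwap, signedSwap_eq_of_apply_ne
      (lowEnd_ne_zero i) (succ_cast_ne_zero i) (by rw [← sB_eq_signedSwap]; omega),
      ← sB_eq_signedSwap, sB_mul_sB_mul]

lemma invNum_sB_mul_lt_iff (hw : IsSignedPerm m w) (hx : x ≠ 0) (hr : r ≠ 0) (hxm : x.natAbs ≤ m)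
    (hrm : r.natAbs ≤ m) (hxr : x ≠ r) (hi : i < m) (hne : sB i * (w * signedSwap x r) ≠ w) :
    invNum m (sB i * w) < invNum m (sB i * (w * signedSwap x r)) ↔
      invNum m w < invNum m (w * signedSwap x r) := by
  have hroot : sB i ≠ signedSwap (w x) (w r) := by
    intro h
    rw [hw.mul_signedSwap hx hr, ← h, sB_mul_sB_mul] at hne
    exact hne rfl
  rw [← mul_assoc, invNum_lt_mul_signedSwap_iff ((isSignedPerm_sB hi).mul hw) hx hr hxm hrm hxr,
    invNum_lt_mul_signedSwap_iff hw hx hr hxm hrm hxr, Equiv.Perm.mul_apply, Equiv.Perm.mul_apply,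
    sB_lt_sB_iff (hw.map_ne_zero hx) (hw.map_ne_zero hr) hroot]

/-- The number of reduced words of `w * signedSwap x r` if this element covers `w` in the Bruhat
order of `B_m`, and zero otherwise. -/
noncomputable def coverCount (m : ℕ) (w : Equiv.Perm ℤ) (r x : ℤ) : ℤ :=
  if invNum m (w * signedSwap x r) = invNum m w + 1 then Nat.card (RSet m (w * signedSwap x r))
  else 0

lemma coverCount_eq_sum (hw : IsSignedPerm m w) (hx : x ≠ 0) (hr : r ≠ 0) (hxm : x.natAbs ≤ m)
    (hrm : r.natAbs ≤ m) :
    coverCount m w r x = ∑ i ∈ Finset.range m,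
      if invNum m (w * signedSwap x r) = invNum m w + 1 ∧ IsLeftDescent (w * signedSwap x r) i
      then (Nat.card (RSet m (sB i * (w * signedSwap x r))) : ℤ) else 0 := by
  rw [coverCount]
  split_ifs with hcover
  · have hne : w * signedSwap x r ≠ 1 := by
      intro h
      rw [h, invNum_one] at hcover
      omega
    rw [card_RSet_eq_sum (hw.mul (isSignedPerm_signedSwap hx hr hxm hrm)) hne, Finset.sum_filter]
    simp [hcover]
  · simp [hcover]

/-- The sign by which `sB i * w` differs in length from `w`. -/
def ascentSign (w : Equiv.Perm ℤ) (i : ℕ) : ℤ := if IsLeftDescent w i then -1 else 1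

-- By the lifting property, left multiplication by `sB i` matches the covers of `w` having `i` as a
-- descent with the covers of `sB i * w`, except where the cover of one is the other.
lemma coverCount_exchange (hw : IsSignedPerm m w) (hx : x ≠ 0) (hr : r ≠ 0) (hxm : x.natAbs ≤ m)
    (hrm : r.natAbs ≤ m) (hxr : x ≠ r) (hi : i < m) :
    (if invNum m (w * signedSwap x r) = invNum m w + 1 ∧ IsLeftDescent (w * signedSwap x r) i
      then (Nat.card (RSet m (sB i * (w * signedSwap x r))) : ℤ) else 0) =
    (if IsLeftDescent w i then coverCount m (sB i * w) r x else 0) +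
      ascentSign w i * if w x = sB i (w r) then (Nat.card (RSet m w) : ℤ) else 0 := by
  have hwt := hw.mul (isSignedPerm_signedSwap hx hr hxm hrm)
  have hasc := invNum_sB_mul_of_not_isLeftDescent hw hi
  have hdesc := invNum_sB_mul_of_isLeftDescent hw hi
  have hasc' := invNum_sB_mul_of_not_isLeftDescent hwt hi
  have hdesc' := invNum_sB_mul_of_isLeftDescent hwt hi
  have hiff := sB_mul_mul_signedSwap_eq_iff (i := i) hw hx hr hxr
  rw [coverCount, mul_assoc, ascentSign]
  by_cases heq : w x = sB i (w r)
  · have hswt := hiff.2 heq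
    have hwt_eq : w * signedSwap x r = sB i * w := by
      rw [← hswt, sB_mul_sB_mul, hswt]
    simp only [heq, if_true, hwt_eq, hw.isLeftDescent_sB_mul hi, sB_mul_sB_mul]
    split_ifs <;> grind
  · have hlift := invNum_sB_mul_lt_iff hw hx hr hxm hrm hxr hi (mt hiff.1 heq)
    simp only [heq, if_false, mul_zero, add_zero]
    split_ifs <;> grind

/-- The positions other than `r` on which a reflection moving `r` may act. -/
noncomputable def otherPositions (m : ℕ) (r : ℤ) : Finset ℤ :=
  (Finset.Icc (-m : ℤ) m).filter fun x ↦ x ≠ 0 ∧ x ≠ r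

lemma mem_otherPositions : x ∈ otherPositions m r ↔ x ≠ 0 ∧ x ≠ r ∧ x.natAbs ≤ m := by
  simp only [otherPositions, Finset.mem_filter, Finset.mem_Icc]
  omega

lemma sum_sign_sub_eq (hw : IsSignedPerm m w) (hr : r ≠ 0) (hrm : r.natAbs ≤ m) (hi : i < m) :
    ∑ x ∈ otherPositions m r, (r - x).sign * (if w x = sB i (w r) then 1 else 0) =
      rootCoeff (lowEnd i) (i + 1) (w r) * ascentSign w i := by
  set x₀ := w⁻¹ (sB i (w r)) with hx₀
  have hsigned := hw.inv.mul ((isSignedPerm_sB hi).mul hw)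
  have hmem : x₀ ∈ otherPositions m r ↔ x₀ ≠ r := by
    rw [mem_otherPositions]
    exact ⟨fun h ↦ h.2.1, fun h ↦ ⟨hsigned.map_ne_zero hr, h, hsigned.natAbs_map_le hrm⟩⟩
  have hsum : ∑ x ∈ otherPositions m r, (r - x).sign * (if w x = sB i (w r) then 1 else 0) =
      (r - x₀).sign := by
    simp only [← Equiv.Perm.eq_inv_iff_eq, ← hx₀, mul_ite, mul_one, mul_zero, Finset.sum_ite_eq',
      hmem]
    split_ifs with h
    · rfl
    · simp [not_not.1 h]
  have hsub : r - x₀ = rootCoeff (lowEnd i) (i + 1) (w r) * (w⁻¹ (i + 1) - w⁻¹ (lowEnd i)) := by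
    rw [hx₀, sB_eq_signedSwap,
      map_signedSwap_apply (lowEnd_ne_zero i) (succ_cast_ne_zero i) hw.inv.map_neg,
      show w⁻¹ (w r) = r by simp]
    ring
  have hcoeff : (rootCoeff (lowEnd i) (i + 1) (w r)).sign = rootCoeff (lowEnd i) (i + 1) (w r) := by
    unfold rootCoeff
    split_ifs <;> rfl
  rw [hsum, hsub, Int.sign_mul, hcoeff, ascentSign]
  congr 1
  split_ifs with h
  · exact Int.sign_eq_neg_one_of_neg (sub_neg.2 (hw.isLeftDescent_iff.1 h))
  · exact Int.sign_eq_one_of_pos (sub_pos.2 (hw.not_isLeftDescent_iff.1 h))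

lemma sum_rootCoeff {b : ℤ} (hbm : b.natAbs < m) :
    ∑ i ∈ Finset.range m, rootCoeff (lowEnd i) (i + 1) b = 0 := by
  have htele (i : ℕ) : rootCoeff (lowEnd i) (i + 1) b =
      ((if b = (i + 1 : ℕ) then 1 else 0) - if b = -(i + 1 : ℕ) then 1 else 0) -
        ((if b = i then 1 else 0) - if b = -i then 1 else 0) := by
    unfold rootCoeff lowEnd
    split_ifs <;> omega
  simp only [htele]
  rw [Finset.sum_range_sub
    (fun i : ℕ ↦ ((if b = i then 1 else 0) - if b = -i then 1 else 0 : ℤ))]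
  split_ifs <;> omega

lemma sB_mul_apply_eq_of_isLeftDescent (hw : IsSignedPerm m w) (hm : w m = m)
    (hi : i < m) (h : IsLeftDescent w i) : (sB i * w) m = m := by
  rw [Equiv.Perm.mul_apply, hm]
  refine sB_apply_of_lt ?_
  by_contra! hle
  obtain rfl : m = i + 1 := by omega
  rw [IsLeftDescent, ← Nat.cast_succ, Equiv.Perm.inv_eq_iff_eq.2 hm.symm] at h
  have := hw.inv.natAbs_map_le (a := i) (by omega)
  omega

lemma sum_sign_mul_descent_term (hw : IsSignedPerm m w) (hr : r ≠ 0) (hrm : r.natAbs ≤ m)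
    (hi : i < m) (hrec : IsLeftDescent w i →
      ∑ x ∈ otherPositions m r, (r - x).sign * coverCount m (sB i * w) r x = 0) :
    ∑ x ∈ otherPositions m r, (r - x).sign *
      (if invNum m (w * signedSwap x r) = invNum m w + 1 ∧ IsLeftDescent (w * signedSwap x r) i
        then (Nat.card (RSet m (sB i * (w * signedSwap x r))) : ℤ) else 0) =
      rootCoeff (lowEnd i) (i + 1) (w r) * Nat.card (RSet m w) := by
  have hrec' : (if IsLeftDescent w i then
      ∑ x ∈ otherPositions m r, (r - x).sign * coverCount m (sB i * w) r x else 0) = 0 :=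
    ite_eq_right_iff.2 hrec
  have hsign : ascentSign w i * ascentSign w i = 1 := by
    unfold ascentSign
    split_ifs <;> rfl
  calc _ = ∑ x ∈ otherPositions m r, ((r - x).sign *
          (if IsLeftDescent w i then coverCount m (sB i * w) r x else 0) +
        (r - x).sign * (if w x = sB i (w r) then 1 else 0) *
          (ascentSign w i * Nat.card (RSet m w))) := by
        refine Finset.sum_congr rfl fun x hx ↦ ?_
        obtain ⟨hx0, hxr, hxm⟩ := mem_otherPositions.1 hx
        rw [coverCount_exchange hw hx0 hr hxm hrm hxr hi]
        split_ifs <;> ring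
    _ = (ascentSign w i * ascentSign w i) *
          (rootCoeff (lowEnd i) (i + 1) (w r) * Nat.card (RSet m w)) := by
        rw [Finset.sum_add_distrib, ← Finset.sum_mul, sum_sign_sub_eq hw hr hrm hi]
        simp only [mul_ite, mul_zero, Finset.sum_ite_irrel, Finset.sum_const_zero, hrec']
        ring
    _ = _ := by rw [hsign, one_mul]

theorem sum_sign_mul_coverCount (hw : IsSignedPerm m w) (hm : w m = m) (hr : 0 < r) (hrm : r < m) :
    ∑ x ∈ otherPositions m r, (r - x).sign * coverCount m w r x = 0 := by
  induction hk : invNum m w using Nat.strong_induction_on generalizing w with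
  | _ k ih =>
  have hterm (i : ℕ) (hi : i ∈ Finset.range m) :=
    sum_sign_mul_descent_term hw hr.ne' (by omega) (Finset.mem_range.1 hi) fun h ↦ by
      have hi := Finset.mem_range.1 hi
      have := invNum_sB_mul_of_isLeftDescent hw hi h
      exact ih _ (by omega) ((isSignedPerm_sB hi).mul hw)
        (sB_mul_apply_eq_of_isLeftDescent hw hm hi h) rfl
  have hwr : (w r).natAbs < m := by
    refine lt_of_le_of_ne (hw.natAbs_map_le (by omega)) fun h ↦ ?_
    rcases Int.natAbs_eq (w r) with h' | h' <;> rw [h, ← hm] at h'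
    · exact hrm.ne (w.injective h')
    · rw [← hw.map_neg] at h'
      have := w.injective h'
      omega
  calc _ = ∑ x ∈ otherPositions m r, ∑ i ∈ Finset.range m, (r - x).sign * _ := by
        refine Finset.sum_congr rfl fun x hx ↦ ?_
        obtain ⟨hx0, -, hxm⟩ := mem_otherPositions.1 hx
        rw [coverCount_eq_sum hw hx0 hr.ne' hxm (by omega), Finset.mul_sum]
    _ = 0 := by
        rw [Finset.sum_comm, Finset.sum_congr rfl hterm, ← Finset.sum_mul,
          sum_rootCoeff hwr, zero_mul]

end CoverIdentity

section Transition

variable {m : ℕ} {v : Equiv.Perm ℤ} {r j k x : ℤ}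

/-- The situation in which the cover identity at position `r` has just two nonzero terms, those of
the reflections exchanging `r` with `j` and with `-k`. -/
structure IsTransition (m : ℕ) (v : Equiv.Perm ℤ) (r j k : ℤ) : Prop where
  isSignedPerm : IsSignedPerm m v
  map_last : v m = m
  pos : 0 < r
  lt_last : r < m
  strictMonoOn : StrictMonoOn v (Set.Ioc r m)
  map_neg_of_pos : v r < 0
  natAbs_lt : ∀ i, 0 < i → i < r → (v i).natAbs < (v r).natAbs
  isLeast_left : IsLeast {x | r < x ∧ v r < v x} j
  isLeast_right : IsLeast {x | r < x ∧ -v r < v x} k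

namespace IsTransition

lemma right_le (h : IsTransition m v r j k) : k ≤ m := by
  refine h.isLeast_right.2 ⟨h.lt_last, ?_⟩
  have hne : v r ≠ -m := by
    rw [← h.map_last, ← h.isSignedPerm.map_neg]
    exact v.injective.ne (by have := h.pos; omega)
  have := h.isSignedPerm.natAbs_map_le (a := r) (by have := h.pos; have := h.lt_last; omega)
  rw [h.map_last]
  omega

lemma left_le_right (h : IsTransition m v r j k) : j ≤ k := by
  have := h.map_neg_of_pos
  exact h.isLeast_left.2 ⟨h.isLeast_right.1.1, by have := h.isLeast_right.1.2; omega⟩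

lemma map_le_of_lt_left (h : IsTransition m v r j k) (hrx : r < x) (hxj : x < j) :
    v x < v r := by
  by_contra! hle
  have hne : v r ≠ v x := v.injective.ne hrx.ne
  exact hxj.not_ge (h.isLeast_left.2 ⟨hrx, by omega⟩)

lemma map_le_of_lt_right (h : IsTransition m v r j k) (hrx : r < x) (hxk : x < k) :
    v x ≤ -v r := by
  by_contra! hlt
  exact hxk.not_ge (h.isLeast_right.2 ⟨hrx, hlt⟩)

lemma invNum_left (h : IsTransition m v r j k) :
    invNum m (v * signedSwap j r) = invNum m v + 1 := by
  have := h.pos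
  have := h.right_le
  have := h.left_le_right
  have := h.lt_last
  obtain ⟨hrj, hvj⟩ := h.isLeast_left.1
  rw [← signedSwap_comm (by omega) h.pos.ne']
  refine invNum_mul_signedSwap_of_forall_not_between h.isSignedPerm (by omega) (by omega) (by omega)
    (by omega) hrj hvj ?_ (Or.inl h.pos)
  rintro c ⟨hrc, hcj, hvc, -⟩
  exact (h.map_le_of_lt_left hrc hcj).not_gt hvc

lemma invNum_right (h : IsTransition m v r j k) :
    invNum m (v * signedSwap (-k) r) = invNum m v + 1 := by
  have := h.pos
  have := h.right_le
  have := h.lt_last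
  have hvr := h.map_neg_of_pos
  have hodd := h.isSignedPerm.map_neg
  obtain ⟨hrk, hvk⟩ := h.isLeast_right.1
  refine invNum_mul_signedSwap_of_forall_not_between h.isSignedPerm (by omega) (by omega) (by omega)
    (by omega) (by omega) (by rw [hodd]; omega) ?_ (Or.inr hvr)
  rintro c ⟨hkc, hcr, hvkc, hvcr⟩
  have hoddc := hodd c
  rcases lt_trichotomy c 0 with hc | rfl | hc
  · rcases lt_trichotomy (-c) r with hcr' | hcr' | hcr'
    · have := h.natAbs_lt (-c) (by omega) hcr'
      omega
    · rw [← hcr'] at hvcr hvr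
      omega
    · have := h.map_le_of_lt_right hcr' (by omega)
      omega
  · rw [h.isSignedPerm.map_zero] at hvcr
    omega
  · have := h.natAbs_lt c hc hcr
    omega

lemma eq_of_invNum_of_lt (h : IsTransition m v r j k) (hx : x ≠ 0) (hxm : x.natAbs ≤ m)
    (hrx : r < x) (hvx : v r < v x) (hcover : invNum m (v * signedSwap x r) = invNum m v + 1) :
    x = j := by
  have := h.pos
  have := h.right_le
  have := h.left_le_right
  obtain ⟨hrj, hvj⟩ := h.isLeast_left.1
  refine ((h.isLeast_left.2 ⟨hrx, hvx⟩).eq_or_lt.resolve_right fun hjx ↦ ?_).symm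
  rw [← signedSwap_comm hx h.pos.ne'] at hcover
  exact invNum_mul_signedSwap_ne_of_between h.isSignedPerm (by omega) hx (by omega) hxm (c := j)
    (by omega) (by omega) (by omega) hrj hjx hvj
    (h.strictMonoOn ⟨hrj, by omega⟩ ⟨hrx, by omega⟩ hjx) hcover

lemma eq_neg_of_invNum_of_lt (h : IsTransition m v r j k) (hx : x ≠ 0) (hxm : x.natAbs ≤ m)
    (hxr : x < r) (hvx : v x < v r) (hcover : invNum m (v * signedSwap x r) = invNum m v + 1) :
    x = -k := by
  have hr := h.pos
  have := h.right_le
  have := h.lt_last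
  have hvr := h.map_neg_of_pos
  have hodd := h.isSignedPerm.map_neg
  have hoddx := hodd x
  obtain ⟨hrk, hvk⟩ := h.isLeast_right.1
  have hrx : r < -x := by
    rcases lt_trichotomy (-x) r with hlt | rfl | hlt
    · have : (v x).natAbs < (v r).natAbs := by
        rcases lt_or_gt_of_ne hx with hx | hx
        · rw [← Int.natAbs_neg, ← hoddx]
          exact h.natAbs_lt _ (by omega) hlt
        · exact h.natAbs_lt x hx hxr
      omega
    · omega
    · exact hlt
  have hkx : k ≤ -x := h.isLeast_right.2 ⟨hrx, by omega⟩
  rcases hkx.eq_or_lt with hkx | hkx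
  · omega
  · have hvkx := h.strictMonoOn ⟨hrk, by omega⟩ ⟨hrx, by omega⟩ hkx
    have hoddk := hodd k
    exact absurd hcover (invNum_mul_signedSwap_ne_of_between h.isSignedPerm hx hr.ne' hxm (by omega)
      (c := -k) (by omega) (by omega) (by omega) (by omega) (by omega) (by omega) (by omega))

theorem card_RSet_eq (h : IsTransition m v r j k) :
    Nat.card (RSet m (v * signedSwap j r)) = Nat.card (RSet m (v * signedSwap (-k) r)) := by
  have hr := h.pos
  have := h.right_le
  have := h.left_le_right
  have hrm := h.lt_last
  have hrj := h.isLeast_left.1.1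
  have hsubset : {j, -k} ⊆ otherPositions m r := by
    simp only [Finset.insert_subset_iff, Finset.singleton_subset_iff, mem_otherPositions]
    omega
  have hzero : ∀ x ∈ otherPositions m r, x ∉ ({j, -k} : Finset ℤ) →
      (r - x).sign * coverCount m v r x = 0 := by
    intro x hx hxjk
    simp only [Finset.mem_insert, Finset.mem_singleton, not_or] at hxjk
    obtain ⟨hx0, hxr, hxm⟩ := mem_otherPositions.1 hx
    rw [coverCount, if_neg, mul_zero]
    intro hcover
    have hiff := (invNum_lt_mul_signedSwap_iff h.isSignedPerm hx0 hr.ne' hxm (by omega) hxr).1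
      (by omega)
    rcases lt_or_gt_of_ne hxr with hlt | hgt
    · exact hxjk.2 (h.eq_neg_of_invNum_of_lt hx0 hxm hlt (hiff.1 hlt) hcover)
    · have hne : v x ≠ v r := v.injective.ne hxr
      exact hxjk.1 (h.eq_of_invNum_of_lt hx0 hxm hgt (by omega) hcover)
  have hsum := sum_sign_mul_coverCount h.isSignedPerm h.map_last hr hrm
  rw [← Finset.sum_subset hsubset hzero, Finset.sum_pair (by omega), coverCount, coverCount,
    if_pos h.invNum_left, if_pos h.invNum_right, Int.sign_eq_neg_one_of_neg (by omega),
    Int.sign_eq_one_of_pos (by omega)] at hsum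
  omega

end IsTransition

end Transition

/-! ### Reduction to Grassmannian elements -/

section Stages

variable {m : ℕ} {w₀ w : Equiv.Perm ℤ} {r c a j k : ℤ} {S : Set ℤ}

/-- A stage in the reduction of `w₀` to a Grassmannian element: `w` has as many reduced words as
`w₀`, agrees with it before position `r`, takes the value `c` at `r`, and increases after `r`, where
its negative values are the opposites of the positive elements of `S`. -/
structure TransitionStage (m : ℕ) (w₀ : Equiv.Perm ℤ) (r : ℤ) (S : Set ℤ) (c : ℤ)
    (w : Equiv.Perm ℤ) : Prop where
  isSignedPerm : IsSignedPerm m w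
  map_last : w m = m
  strictMonoOn : StrictMonoOn w (Set.Ioc r m)
  map_of_lt : ∀ i, 0 ≤ i → i < r → w i = w₀ i
  natAbs_map_of_lt : ∀ i, 0 ≤ i → i < r → (w i).natAbs = i.natAbs
  map_pivot : w r = c
  mem_iff : ∀ x, 0 < x → (x ∈ S ↔ ∃ i, r < i ∧ w i = -x)
  card_eq : Nat.card (RSet m w) = Nat.card (RSet m w₀)

/-- The condition under which a transition at position `r` turns the value `c` at `r` and the
values `-a`, `a + 1` after `r` into `-(a + 1)` and `c`, `a`, respectively. -/
structure CanExchange (S : Set ℤ) (r c a : ℤ) : Prop where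
  mem : a ∈ S
  succ_notMem : a + 1 ∉ S
  le : r ≤ a
  neg_lt : -a < c
  le_of_mem : ∀ y ∈ S, -y < c → a ≤ y
  pivot_le : c ≤ r

lemma mul_signedSwap_apply_of_nonneg (hr : 0 < r) (hj : 0 < j) {i : ℤ} (hi : 0 ≤ i) :
    (w * signedSwap j r) i = if i = r then w j else if i = j then w r else w i := by
  rw [Equiv.Perm.mul_apply, signedSwap_apply hj.ne' hr.ne']
  split_ifs <;> first | omega | simp_all

lemma IsSignedPerm.mul_signedSwap_neg_apply_of_nonneg (hw : IsSignedPerm m w) (hr : 0 < r)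
    (hk : 0 < k) {i : ℤ} (hi : 0 ≤ i) :
    (w * signedSwap (-k) r) i = if i = r then -w k else if i = k then -w r else w i := by
  rw [Equiv.Perm.mul_apply, signedSwap_apply (by omega) hr.ne']
  split_ifs <;> first | omega | simp_all [hw.map_neg]

namespace TransitionStage

lemma le_last (st : TransitionStage m w₀ r S c w) {i : ℤ} (hi : 0 < i) (h : w i ≠ i) : i ≤ m := by
  by_contra! hlt
  exact h (st.isSignedPerm.map_of_lt i (by omega))

lemma le_map_of_pos (st : TransitionStage m w₀ r S c w) {i : ℤ} (hi : r < i)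
    (hpos : 0 < w i) : r ≤ w i := by
  by_contra! hlt
  rcases Int.natAbs_eq_natAbs_iff.1 (st.natAbs_map_of_lt _ hpos.le hlt) with h | h
  · have := w.injective h
    omega
  · rw [← neg_eq_iff_eq_neg, ← st.isSignedPerm.map_neg] at h
    have := w.injective h
    omega

lemma exists_map_eq_neg (st : TransitionStage m w₀ r S c w) (hr : 0 < r)
    (h : CanExchange S r c a) : ∃ j, r < j ∧ j ≤ m ∧ w j = -a := by
  have := h.le
  obtain ⟨j, hrj, hwj⟩ := (st.mem_iff a (by omega)).1 h.mem
  exact ⟨j, hrj, st.le_last (by omega) (by omega), hwj⟩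

lemma exists_map_eq_succ (st : TransitionStage m w₀ r S c w) (hr : 0 < r) (ham : a + 1 < m)
    (h : CanExchange S r c a) : ∃ k, r < k ∧ k < m ∧ w k = a + 1 := by
  have hra := h.le
  have hcr := h.pivot_le
  have hca := h.neg_lt
  obtain ⟨k, hk⟩ := w.surjective (a + 1)
  have hodd := st.isSignedPerm.map_neg k
  have hrk : r < k := by
    by_contra! hkr
    have hkr' : k ≠ r := fun hkr ↦ by
      rw [hkr, st.map_pivot] at hk
      omega
    rcases lt_or_ge k 0 with hneg | hnonneg
    · rcases lt_trichotomy (-k) r with hlt | heq | hgt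
      · have := st.natAbs_map_of_lt _ (by omega) hlt
        omega
      · rw [heq, st.map_pivot] at hodd
        exact h.succ_notMem (by omega)
      · exact h.succ_notMem ((st.mem_iff _ (by omega)).2 ⟨-k, hgt, by omega⟩)
    · have := st.natAbs_map_of_lt k hnonneg (by omega)
      omega
  refine ⟨k, hrk, ?_, hk⟩
  by_contra! hmk
  rcases hmk.eq_or_lt with rfl | hlt
  · rw [st.map_last] at hk
    omega
  · rw [st.isSignedPerm.map_of_lt k (by omega)] at hk
    omega

lemma pivot_lt_of_lt (st : TransitionStage m w₀ r S c w) (hr : 0 < r) (h : CanExchange S r c a)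
    (hrj : r < j) (hwj : w j = -a) {i : ℤ} (hji : j < i) (him : i ≤ m) : c < w i := by
  have hlt := st.strictMonoOn ⟨hrj, by omega⟩ ⟨by omega, him⟩ hji
  have hne : w i ≠ c := st.map_pivot ▸ w.injective.ne (by omega)
  have hcr := h.pivot_le
  rcases lt_trichotomy (w i) 0 with hneg | hzero | hpos
  · by_contra! hle
    have := h.le_of_mem (-w i) ((st.mem_iff _ (by omega)).2 ⟨i, by omega, by omega⟩) (by omega)
    omega
  · exact absurd hzero (st.isSignedPerm.map_ne_zero (by omega))
  · have := st.le_map_of_pos (by omega) hpos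
    omega

lemma isTransition (st : TransitionStage m w₀ r S c w) (hr : 0 < r) (h : CanExchange S r c a)
    (hrj : r < j) (hwj : w j = -a) (hrk : r < k) (hkm : k < m) (hwk : w k = a + 1) (hjk : j < k) :
    IsTransition m (w * signedSwap j r) r j k := by
  have hra := h.le
  have hcr := h.pivot_le
  have hca := h.neg_lt
  have hv {i : ℤ} (hi : 0 ≤ i) :
      (w * signedSwap j r) i = if i = r then -a else if i = j then c else w i := by
    rw [mul_signedSwap_apply_of_nonneg hr (by omega) hi, hwj, st.map_pivot]
  have hvr : (w * signedSwap j r) r = -a := by rw [hv hr.le, if_pos rfl]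
  refine ⟨st.isSignedPerm.mul
    (isSignedPerm_signedSwap (by omega) hr.ne' (by omega) (by omega)), ?_, hr, by omega, ?_,
    by omega, fun i hi hir ↦ ?_, ⟨⟨hrj, ?_⟩, fun i hi ↦ ?_⟩, ⟨⟨hrk, ?_⟩, fun i hi ↦ ?_⟩⟩
  · rw [hv (by omega), if_neg (by omega), if_neg (by omega), st.map_last]
  · rintro x ⟨hrx, hxm⟩ y ⟨hry, hym⟩ hxy
    have hlt := st.strictMonoOn ⟨hrx, hxm⟩ ⟨hry, hym⟩ hxy
    have := st.pivot_lt_of_lt hr h hrj hwj (i := y)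
    rw [hv (by omega), hv (by omega)]
    split_ifs <;> grind
  · have := st.natAbs_map_of_lt i hi.le hir
    rw [hvr, hv hi.le, if_neg (by omega), if_neg (by omega)]
    omega
  · rw [hvr, hv (by omega), if_neg (by omega), if_pos rfl]
    exact hca
  · obtain ⟨hri, hi⟩ := hi
    by_contra! hij
    have := st.strictMonoOn ⟨hri, by omega⟩ ⟨hrj, by omega⟩ hij
    rw [hvr, hv (by omega), if_neg (by omega), if_neg (by omega)] at hi
    omega
  · rw [hvr, hv (by omega), if_neg (by omega), if_neg (by omega)]
    omega
  · obtain ⟨hri, hi⟩ := hi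
    by_contra! hik
    have := st.strictMonoOn ⟨hri, by omega⟩ ⟨hrk, by omega⟩ hik
    rw [hvr, hv (by omega), if_neg (by omega)] at hi
    split_ifs at hi <;> omega

lemma exchange_apply (st : TransitionStage m w₀ r S c w) (hr : 0 < r) (hrj : r < j)
    (hwj : w j = -a) (hjm : j ≤ m) (hrk : r < k) (hwk : w k = a + 1) (hjk : j < k) {i : ℤ}
    (hi : 0 ≤ i) : (w * signedSwap j r * signedSwap (-k) r) i =
      if i = r then -(a + 1) else if i = j then c else if i = k then a else w i := by
  have hsigned := st.isSignedPerm.mul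
    (isSignedPerm_signedSwap (x := j) (y := r) (by omega) hr.ne' (by omega) (by omega))
  simp only [hsigned.mul_signedSwap_neg_apply_of_nonneg hr (hr.trans hrk) hi,
    mul_signedSwap_apply_of_nonneg hr (hr.trans hrj), hi, hr.le, (hr.trans hrk).le, hwj, hwk,
    st.map_pivot]
  split_ifs <;> omega

lemma map_ne_of_map_eq_neg (st : TransitionStage m w₀ r S c w) (hj : 0 < j) (hwj : w j = -a)
    {i : ℤ} (hi : 0 < i) : w i ≠ a := by
  intro hia
  rw [← neg_neg a, ← hwj, ← st.isSignedPerm.map_neg] at hia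
  have := w.injective hia
  omega

lemma exchange (st : TransitionStage m w₀ r S c w) (hr : 0 < r) (h : CanExchange S r c a)
    (hrj : r < j) (hwj : w j = -a) (hrk : r < k) (hkm : k < m) (hwk : w k = a + 1) (hjk : j < k) :
    TransitionStage m w₀ r ((S \ {a}) ∪ {-c}) (-(a + 1))
      (w * signedSwap j r * signedSwap (-k) r) := by
  have hra := h.le
  have hcr := h.pivot_le
  have hca := h.neg_lt
  have htrans := st.isTransition hr h hrj hwj hrk hkm hwk hjk
  have hw' {i : ℤ} (hi : 0 ≤ i) := st.exchange_apply hr hrj hwj (by omega) hrk hwk hjk hi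
  have hne (i : ℤ) (hi : 0 < i) : w i ≠ a :=
    st.map_ne_of_map_eq_neg (hr.trans hrj) hwj hi
  have hca' : c ≠ a := st.map_pivot ▸ hne r hr
  refine ⟨htrans.isSignedPerm.mul
    (isSignedPerm_signedSwap (by omega) hr.ne' (by omega) (by omega)), ?_, ?_, ?_, ?_, ?_, ?_, ?_⟩
  · rw [hw' (by omega), if_neg (by omega), if_neg (by omega), if_neg (by omega), st.map_last]
  · rintro x ⟨hrx, hxm⟩ y ⟨hry, hym⟩ hxy
    have hlt := st.strictMonoOn ⟨hrx, hxm⟩ ⟨hry, hym⟩ hxy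
    have := st.pivot_lt_of_lt hr h hrj hwj (i := y)
    have := hne x (by omega)
    rw [hw' (by omega), hw' (by omega)]
    split_ifs <;> grind
  · intro i hi hir
    rw [hw' hi, if_neg (by omega), if_neg (by omega), if_neg (by omega), st.map_of_lt i hi hir]
  · intro i hi hir
    rw [hw' hi, if_neg (by omega), if_neg (by omega), if_neg (by omega),
      st.natAbs_map_of_lt i hi hir]
  · rw [hw' hr.le, if_pos rfl]
  · intro x hx
    simp only [Set.mem_union, Set.mem_sdiff, Set.mem_singleton_iff, st.mem_iff x hx]
    constructor
    · rintro (⟨⟨i, hri, hi⟩, hxa⟩ | rfl)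
      · exact ⟨i, hri, by rw [hw' (by omega)]; split_ifs <;> grind⟩
      · exact ⟨j, hrj, by rw [hw' (by omega), if_neg (by omega), if_pos rfl, neg_neg]⟩
    · rintro ⟨i, hri, hi⟩
      rw [hw' (by omega), if_neg hri.ne'] at hi
      split_ifs at hi with hij
      · omega
      · omega
      · exact Or.inl ⟨⟨i, hri, hi⟩, fun hxa ↦ hij (w.injective (by omega))⟩
  · rw [← htrans.card_RSet_eq, mul_assoc, signedSwap_mul_self (by omega) hr.ne', mul_one,
      st.card_eq]

lemma merge (st : TransitionStage m w₀ r S c w) (hr : 0 < r) (hcr : c ≤ r)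
    (hS : ∀ y ∈ S, c < -y) : TransitionStage m w₀ (r - 1) (S ∪ {-c}) (w₀ (r - 1)) w := by
  refine ⟨st.isSignedPerm, st.map_last, ?_, fun i hi hir ↦ st.map_of_lt i hi (by omega),
    fun i hi hir ↦ st.natAbs_map_of_lt i hi (by omega), st.map_of_lt _ (by omega) (by omega),
    fun x hx ↦ ?_, st.card_eq⟩
  · rintro x ⟨hrx, hxm⟩ y ⟨-, hym⟩ hxy
    rcases eq_or_lt_of_le (show r ≤ x by omega) with rfl | hrx'
    · rw [st.map_pivot]
      rcases lt_trichotomy (w y) 0 with hneg | hzero | hpos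
      · have := hS (-w y) ((st.mem_iff _ (by omega)).2 ⟨y, hxy, by omega⟩)
        omega
      · exact absurd hzero (st.isSignedPerm.map_ne_zero (by omega))
      · have := st.le_map_of_pos hxy hpos
        have hne : w y ≠ c := st.map_pivot ▸ w.injective.ne hxy.ne'
        omega
    · exact st.strictMonoOn ⟨hrx', hxm⟩ ⟨by omega, hym⟩ hxy
  · simp only [Set.mem_union, Set.mem_singleton_iff, st.mem_iff x hx]
    constructor
    · rintro (⟨i, hri, hi⟩ | rfl)
      · exact ⟨i, by omega, hi⟩
      · exact ⟨r, by omega, by rw [st.map_pivot, neg_neg]⟩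
    · rintro ⟨i, hri, hi⟩
      rcases eq_or_lt_of_le (show r ≤ i by omega) with rfl | hri'
      · exact Or.inr (by rw [← st.map_pivot, hi, neg_neg])
      · exact Or.inl ⟨i, hri', hi⟩

end TransitionStage

/-- Some element is at the stage `(r, S, c)` of the reduction of `w₀`. -/
def ReachesStage (m : ℕ) (w₀ : Equiv.Perm ℤ) (r : ℤ) (S : Set ℤ) (c : ℤ) : Prop :=
  ∃ w, TransitionStage m w₀ r S c w

namespace ReachesStage

lemma congr {T : Set ℤ} {c' : ℤ} (h : ReachesStage m w₀ r S c) (hc : c = c')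
    (hST : ∀ x, 0 < x → (x ∈ S ↔ x ∈ T)) : ReachesStage m w₀ r T c' := by
  obtain ⟨w, st⟩ := h
  exact ⟨w, { st with
    map_pivot := st.map_pivot.trans hc
    mem_iff := fun x hx ↦ (hST x hx).symm.trans (st.mem_iff x hx) }⟩

lemma exchange (h : ReachesStage m w₀ r S c) (hr : 0 < r) (ham : a + 1 < m)
    (ha : CanExchange S r c a) : ReachesStage m w₀ r ((S \ {a}) ∪ {-c}) (-(a + 1)) := by
  obtain ⟨w, st⟩ := h
  obtain ⟨j, hrj, hjm, hwj⟩ := st.exists_map_eq_neg hr ha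
  obtain ⟨k, hrk, hkm, hwk⟩ := st.exists_map_eq_succ hr ham ha
  have hra := ha.le
  have hjk : j < k := (st.strictMonoOn.lt_iff_lt ⟨hrj, hjm⟩ ⟨hrk, hkm.le⟩).1 (by omega)
  exact ⟨_, st.exchange hr ha hrj hwj hrk hkm hwk hjk⟩

lemma merge (h : ReachesStage m w₀ r S c) (hr : 0 < r) (hcr : c ≤ r) (hS : ∀ y ∈ S, c < -y) :
    ReachesStage m w₀ (r - 1) (S ∪ {-c}) (w₀ (r - 1)) := by
  obtain ⟨w, st⟩ := h
  exact ⟨w, st.merge hr hcr hS⟩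

end ReachesStage

/-- The arithmetic progression `q, q + 2, …, q + 2 (l - 1)`. -/
def stepTwo (q : ℤ) (l : ℕ) : Set ℤ := {x | q ≤ x ∧ x < q + 2 * l ∧ (x - q) % 2 = 0}

lemma mem_stepTwo {q x : ℤ} {l : ℕ} :
    x ∈ stepTwo q l ↔ q ≤ x ∧ x < q + 2 * l ∧ (x - q) % 2 = 0 :=
  Iff.rfl

namespace ReachesStage

variable {q : ℤ} {l : ℕ}

lemma partial_sweep (h : ReachesStage m w₀ r (stepTwo q l) (1 - q)) (hr : 0 < r) (hrq : r < q)
    (hqm : q + 2 * l ≤ m) {d : ℕ} (hd : d ≤ l) :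
    ReachesStage m w₀ r (stepTwo (q - 1) d ∪ stepTwo (q + 2 * d) (l - d)) (1 - q - 2 * d) := by
  induction d with
  | zero => exact h.congr (by simp) fun x _ ↦ by simp only [Set.mem_union, mem_stepTwo]; omega
  | succ d ih =>
    have hexch : CanExchange (stepTwo (q - 1) d ∪ stepTwo (q + 2 * d) (l - d)) r (1 - q - 2 * d)
        (q + 2 * d) := by
      constructor <;> grind [mem_stepTwo]
    refine ((ih (by omega)).exchange hr (by omega) hexch).congr (by push_cast; ring) fun x _ ↦ ?_
    simp only [Set.mem_union, Set.mem_sdiff, Set.mem_singleton_iff, mem_stepTwo]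
    omega

lemma sweep (h : ReachesStage m w₀ r (stepTwo q l) (1 - q)) (hr : 0 < r) (hrq : r < q)
    (hqm : q + 2 * l ≤ m) : ReachesStage m w₀ (r - 1) (stepTwo (q - 1) (l + 1)) (w₀ (r - 1)) := by
  refine ((h.partial_sweep hr hrq hqm le_rfl).merge hr (by omega) fun y hy ↦ ?_).congr rfl
    fun x _ ↦ ?_ <;> simp only [Set.mem_union, Set.mem_singleton_iff, mem_stepTwo] at * <;> omega

lemma of_negative_pivot (h : ReachesStage m w₀ r (stepTwo (r + 1) l) (-r)) (hr : 0 < r)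
    (hrm : r + 1 + 2 * l ≤ m) : ReachesStage m w₀ (r - 1) (stepTwo r (l + 1)) (w₀ (r - 1)) := by
  rw [show -r = 1 - (r + 1) by ring] at h
  simpa using h.sweep hr (by omega) hrm

lemma of_positive_pivot (h : ReachesStage m w₀ r (stepTwo q l) r) (hr : 0 < r) (hrq : r < q)
    (hqm : q + 2 * l ≤ m) : ReachesStage m w₀ (r - 1) (stepTwo (q + 1) l) (w₀ (r - 1)) := by
  rcases l with _ | l
  · refine (h.merge hr le_rfl fun y hy ↦ ?_).congr rfl fun x hx ↦ ?_ <;>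
      simp only [Set.mem_union, Set.mem_singleton_iff, mem_stepTwo] at * <;> omega
  · have hexch : CanExchange (stepTwo q (l + 1)) r r q := by
      constructor <;> grind [mem_stepTwo]
    have hstart : ReachesStage m w₀ r (stepTwo (q + 2) l) (1 - (q + 2)) := by
      refine (h.exchange hr (by omega) hexch).congr (by ring) fun x hx ↦ ?_
      simp only [Set.mem_union, Set.mem_sdiff, Set.mem_singleton_iff, mem_stepTwo]
      omega
    convert hstart.sweep hr (by omega) (by push_cast at hqm; omega) using 2
    ring

end ReachesStage

end Stages

/-! ### Schur's product formula for shifted tableaux -/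

section SchurProduct

open Polynomial in
lemma sum_mul_prod_erase_sub_div_sub {ι F : Type*} [DecidableEq ι] [Field F] {s : Finset ι}
    {f : ι → F} (hf : Set.InjOn f s) (a : ι → F) :
    ∑ i ∈ s, a i * ∏ j ∈ s.erase i, (f i - (f j + a j)) / (f i - f j) = ∑ i ∈ s, a i := by
  rcases s.eq_empty_or_nonempty with rfl | hs
  · simp
  set P : F[X] := ∏ j ∈ s, (X - C (f j))
  set Q : F[X] := ∏ j ∈ s, (X - C (f j + a j))
  have degree_P : P.degree = s.card := by simp [P, degree_prod]
  have degree_Q : Q.degree = s.card := by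
    simp only [Q, degree_prod, degree_X_sub_C, Finset.sum_const, nsmul_one]
  have monic_P : P.Monic := monic_prod_X_sub_C f s
  have monic_Q : Q.Monic := monic_prod_X_sub_C (fun j ↦ f j + a j) s
  have degree_sub : (P - Q).degree < s.card := degree_P ▸ degree_sub_lt_left
    (degree_P.trans degree_Q.symm) monic_P.ne_zero (monic_P.leadingCoeff.trans monic_Q.symm)
  have coeff_sub : (P - Q).coeff (s.card - 1) = ∑ i ∈ s, a i := by
    rw [Polynomial.coeff_sub, prod_X_sub_C_coeff_card_pred s f hs.card_pos,
      prod_X_sub_C_coeff_card_pred s (fun j ↦ f j + a j) hs.card_pos, Finset.sum_add_distrib]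
    ring
  have eval_sub (i) (hi : i ∈ s) :
      (P - Q).eval (f i) = a i * ∏ j ∈ s.erase i, (f i - (f j + a j)) := by
    rw [Polynomial.eval_sub, eval_prod, eval_prod, Finset.prod_eq_zero hi (by simp),
      ← Finset.mul_prod_erase s _ hi]
    simp
  rw [← coeff_sub, Lagrange.coeff_eq_sum hf degree_sub]
  refine Finset.sum_congr rfl fun i hi ↦ ?_
  rw [eval_sub i hi, Finset.prod_div_distrib, mul_div_assoc]

/-- `schurProduct S` is Schur's product `∏ 1 / x! · ∏ (x - y) / (x + y)`, the second product over
the pairs `y < x` in `S`. Multiplied by `(∑ x ∈ S, x)!` it counts the standard tableaux of the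
shifted shape whose row lengths are the elements of `S`. -/
def schurProduct (S : Finset ℕ) : ℚ :=
  ∏ x ∈ S, (x.factorial : ℚ)⁻¹ * ∏ y ∈ S, if y < x then ((x : ℚ) - y) / (x + y) else 1

lemma schurProduct_insert {z : ℕ} {T : Finset ℕ} (hz : z ∉ T) :
    schurProduct (insert z T) =
      schurProduct T * (z.factorial : ℚ)⁻¹ * ∏ y ∈ T, |(z : ℚ) - y| / (z + y) := by
  have pair_factor (y) (hy : y ∈ T) : |(z : ℚ) - y| / (z + y) =
      (if y < z then ((z : ℚ) - y) / (z + y) else 1) *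
        if z < y then ((y : ℚ) - z) / (y + z) else 1 := by
    rcases lt_trichotomy y z with h | rfl | h
    · rw [if_pos h, if_neg h.not_gt, mul_one, abs_of_nonneg (by simpa using h.le)]
    · exact absurd hy hz
    · rw [if_neg h.not_gt, if_pos h, one_mul, abs_sub_comm,
        abs_of_nonneg (by simpa using h.le), add_comm]
  rw [Finset.prod_congr rfl pair_factor]
  simp only [schurProduct, Finset.prod_insert hz, Finset.prod_mul_distrib, lt_irrefl, if_false]
  ring

lemma schurProduct_erase_zero (S : Finset ℕ) : schurProduct (S.erase 0) = schurProduct S := by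
  by_cases h : 0 ∈ S
  · conv_rhs => rw [← Finset.insert_erase h, schurProduct_insert (Finset.notMem_erase 0 S)]
    rw [Finset.prod_eq_one]
    · simp
    · intro y hy
      have : (y : ℚ) ≠ 0 := by exact_mod_cast Finset.ne_of_mem_erase hy
      simp [this]
  · rw [Finset.erase_eq_of_notMem h]

/-- `lowerPart S i` replaces the part `i + 1` of `S` by `i`; a part lowered to `0` is dropped. -/
def lowerPart (S : Finset ℕ) (i : ℕ) : Finset ℕ := (insert i (S.erase (i + 1))).erase 0

lemma sum_lowerPart_add_one {S : Finset ℕ} {i : ℕ} (hmem : i + 1 ∈ S) (hi : i ∉ S) :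
    ∑ x ∈ lowerPart S i, x + 1 = ∑ x ∈ S, x := by
  rw [lowerPart, Finset.sum_erase (f := fun x ↦ x) _ rfl, Finset.sum_insert (by simp [hi]),
    ← Finset.add_sum_erase S _ hmem]
  ring

/-- `x * lowerRatio S x` is the factor by which `schurProduct S` changes when the part `x` of `S`
is lowered by one. -/
def lowerRatio (S : Finset ℕ) (x : ℕ) : ℚ :=
  ∏ y ∈ S.erase x, (((x : ℚ) - y - 1) * (x + y)) / ((x - y) * (x + y - 1))

lemma sum_mul_lowerRatio {S : Finset ℕ} (h0 : 0 ∉ S) :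
    ∑ x ∈ S, x * lowerRatio S x = ∑ x ∈ S, (x : ℚ) := by
  have one_le {x : ℕ} (hx : x ∈ S) : (1 : ℚ) ≤ x := by
    exact_mod_cast Nat.pos_of_ne_zero (ne_of_mem_of_not_mem hx h0)
  have hinj : Set.InjOn (fun x : ℕ ↦ (x : ℚ) * (x - 1)) S := by
    intro x hx y hy (hxy : (x : ℚ) * (x - 1) = y * (y - 1))
    have hfactor : ((x : ℚ) - y) * (x + y - 1) = 0 := by linear_combination hxy
    have hne : (x : ℚ) + y - 1 ≠ 0 := by linarith [one_le hx, one_le hy]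
    exact_mod_cast sub_eq_zero.1 ((mul_eq_zero.1 hfactor).resolve_right hne)
  have h := sum_mul_prod_erase_sub_div_sub hinj fun x ↦ 2 * (x : ℚ)
  simp only [mul_assoc, ← Finset.mul_sum] at h
  rw [← mul_right_injective₀ (two_ne_zero' ℚ) h]
  refine Finset.sum_congr rfl fun x _ ↦ congrArg _ (Finset.prod_congr rfl fun y _ ↦ ?_)
  congr 1 <;> ring

lemma abs_sub_div_add_mul_lower {i y : ℕ} (hy : 0 < y) (hne : y ≠ i + 1) :
    |((i + 1 : ℕ) : ℚ) - y| / ((i + 1 : ℕ) + y) *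
      (((((i + 1 : ℕ) : ℚ) - y - 1) * ((i + 1 : ℕ) + y)) /
        ((((i + 1 : ℕ) : ℚ) - y) * ((i + 1 : ℕ) + y - 1))) = |(i : ℚ) - y| / (i + y) := by
  have h₁ : (i : ℚ) + y ≠ 0 := by positivity
  have h₂ : (i : ℚ) + 1 + y ≠ 0 := by positivity
  push_cast
  rw [show (i : ℚ) + 1 - y - 1 = i - y by ring, show (i : ℚ) + 1 + y - 1 = i + y by ring]
  rcases hne.lt_or_gt with h | h
  · have h' : (y : ℚ) ≤ i := by exact_mod_cast Nat.le_of_lt_succ h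
    have h₃ : (i : ℚ) + 1 - y ≠ 0 := by linarith
    rw [abs_of_nonneg (by linarith), abs_of_nonneg (by linarith)]
    field
  · have h' : (i : ℚ) + 1 < y := by exact_mod_cast h
    have h₃ : (i : ℚ) + 1 - y ≠ 0 := by linarith
    rw [abs_of_neg (by linarith), abs_of_neg (by linarith)]
    field

lemma schurProduct_lowerPart {S : Finset ℕ} (h0 : 0 ∉ S) {i : ℕ} (hmem : i + 1 ∈ S)
    (hi : i ∉ S) :
    schurProduct (lowerPart S i) = schurProduct S * ((i + 1 : ℕ) * lowerRatio S (i + 1)) := by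
  set T := S.erase (i + 1)
  have hiT : i ∉ T := fun h ↦ hi (Finset.mem_of_mem_erase h)
  have hprod : ∏ y ∈ T, |(i : ℚ) - y| / (i + y) =
      (∏ y ∈ T, |((i + 1 : ℕ) : ℚ) - y| / ((i + 1 : ℕ) + y)) * lowerRatio S (i + 1) := by
    rw [lowerRatio, ← Finset.prod_mul_distrib]
    refine Finset.prod_congr rfl fun y hy ↦ (abs_sub_div_add_mul_lower ?_ ?_).symm
    · exact Nat.pos_of_ne_zero (ne_of_mem_of_not_mem (Finset.mem_of_mem_erase hy) h0)
    · exact Finset.ne_of_mem_erase hy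
  have hS : schurProduct S = schurProduct T * ((i + 1).factorial : ℚ)⁻¹ *
      ∏ y ∈ T, |((i + 1 : ℕ) : ℚ) - y| / ((i + 1 : ℕ) + y) := by
    rw [← schurProduct_insert (Finset.notMem_erase _ _), Finset.insert_erase hmem]
  have hfactorial : (i.factorial : ℚ)⁻¹ = ((i + 1).factorial : ℚ)⁻¹ * (i + 1 : ℕ) := by
    rw [Nat.factorial_succ, Nat.cast_mul]
    field
  rw [lowerPart, schurProduct_erase_zero, schurProduct_insert hiT, hprod, hS, hfactorial]
  ring

lemma lowerRatio_succ_eq_zero {S : Finset ℕ} {i : ℕ} (hi : i ∈ S) : lowerRatio S (i + 1) = 0 := by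
  rw [lowerRatio]
  refine Finset.prod_eq_zero (i := i) (by simp [hi]) ?_
  push_cast
  ring

lemma sum_schurProduct_lowerPart {S : Finset ℕ} (h0 : 0 ∉ S) {m : ℕ} (hm : ∀ x ∈ S, x ≤ m) :
    ∑ i ∈ Finset.range m with i + 1 ∈ S ∧ i ∉ S, schurProduct (lowerPart S i) =
      (∑ x ∈ S, x : ℕ) * schurProduct S := by
  have reindex (f : ℕ → ℚ) :
      ∑ i ∈ Finset.range m with i + 1 ∈ S, f (i + 1) = ∑ x ∈ S, f x := by
    rw [← Finset.sum_image (g := fun i ↦ i + 1) (f := f) (by simp)]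
    congr 1
    ext x
    cases x with
    | zero => simp [h0]
    | succ x => simpa using hm (x + 1)
  calc ∑ i ∈ Finset.range m with i + 1 ∈ S ∧ i ∉ S, schurProduct (lowerPart S i)
      = ∑ i ∈ Finset.range m with i + 1 ∈ S,
          schurProduct S * ((i + 1 : ℕ) * lowerRatio S (i + 1)) := by
        rw [← Finset.filter_filter, Finset.sum_filter]
        refine Finset.sum_congr rfl fun i hi ↦ ?_
        split_ifs with h
        · rw [lowerRatio_succ_eq_zero h, mul_zero, mul_zero]
        · exact schurProduct_lowerPart h0 (Finset.mem_filter.1 hi).2 h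
    _ = ∑ x ∈ S, schurProduct S * (x * lowerRatio S x) :=
        reindex fun x ↦ schurProduct S * (x * lowerRatio S x)
    _ = (∑ x ∈ S, x : ℕ) * schurProduct S := by
        rw [← Finset.mul_sum, sum_mul_lowerRatio h0, mul_comm, Nat.cast_sum]

end SchurProduct

/-! ### Reduced words of Grassmannian elements -/

section Grassmannian

variable {m i : ℕ} {S : Finset ℕ} {w : Equiv.Perm ℤ}

/-- The signed permutation `w` is Grassmannian, that is, increasing on the positive integers, and
the opposites of the elements of `S` are its negative values there. -/
structure IsGrassmannian (m : ℕ) (S : Finset ℕ) (w : Equiv.Perm ℤ) : Prop where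
  isSignedPerm : IsSignedPerm m w
  strictMonoOn : StrictMonoOn w (Set.Ioi 0)
  mem_iff : ∀ x : ℕ, x ∈ S ↔ w⁻¹ x < 0

lemma sB_apply_natCast (i x : ℕ) :
    sB i x = if x = i + 1 then lowEnd i else if x = i ∧ i ≠ 0 then i + 1 else (x : ℤ) := by
  rw [sB_eq_signedSwap, signedSwap_apply (lowEnd_ne_zero i) (succ_cast_ne_zero i)]
  unfold lowEnd
  split_ifs <;> grind

namespace IsGrassmannian

lemma zero_notMem (g : IsGrassmannian m S w) : 0 ∉ S := by
  rw [g.mem_iff, Nat.cast_zero, g.isSignedPerm.inv.map_zero]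
  exact lt_irrefl 0

lemma le_of_mem (g : IsGrassmannian m S w) {x : ℕ} (hx : x ∈ S) : x ≤ m := by
  rw [g.mem_iff] at hx
  by_contra! h
  rw [g.isSignedPerm.inv.map_of_lt x (by omega)] at hx
  omega

lemma isLeftDescent_iff (g : IsGrassmannian m S w) : IsLeftDescent w i ↔ i + 1 ∈ S ∧ i ∉ S := by
  have hinv {a b : ℤ} (ha : 0 < w⁻¹ a) (hb : 0 < w⁻¹ b) : w⁻¹ a < w⁻¹ b ↔ a < b := by
    simpa using (g.strictMonoOn.lt_iff_lt ha hb).symm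
  have hne := g.isSignedPerm.inv.map_ne_zero (succ_cast_ne_zero i)
  have hpos := hinv (a := i + 1) (b := i)
  have hneg := hinv (a := -i) (b := -(i + 1))
  rw [g.isSignedPerm.inv.map_neg, g.isSignedPerm.inv.map_neg] at hneg
  rw [g.mem_iff, g.mem_iff, IsLeftDescent, Nat.cast_succ]
  omega

lemma sB_mul (g : IsGrassmannian m S w) (hi : i < m) (hdesc : IsLeftDescent w i) :
    IsGrassmannian m (lowerPart S i) (sB i * w) where
  isSignedPerm := (isSignedPerm_sB hi).mul g.isSignedPerm
  strictMonoOn x hx y hy hxy := by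
    have hlt := g.isSignedPerm.isLeftDescent_iff.1 hdesc
    have hne : sB i (w x) ≠ sB i (w y) := (sB i).injective.ne (w.injective.ne hxy.ne)
    refine hne.lt_of_le (not_lt.1 fun h ↦ ?_)
    rcases eq_root_of_sB_lt (g.isSignedPerm.map_ne_zero (ne_of_gt hx))
      (g.isSignedPerm.map_ne_zero (ne_of_gt hy)) (g.strictMonoOn hx hy hxy) h with
      ⟨hlow, hhigh⟩ | ⟨hlow, hhigh⟩
    · rw [← hlow, ← hhigh] at hlt
      simp only [Equiv.Perm.coe_inv, Equiv.symm_apply_apply] at hlt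
      omega
    · rw [← neg_eq_iff_eq_neg, ← g.isSignedPerm.map_neg] at hlow hhigh
      rw [← hlow, ← hhigh] at hlt
      simp only [Equiv.Perm.coe_inv, Equiv.symm_apply_apply, neg_lt_neg_iff] at hlt
      omega
  mem_iff x := by
    obtain ⟨hmem, hnotMem⟩ := g.isLeftDescent_iff.1 hdesc
    have hlow : ¬w⁻¹ (lowEnd i) < 0 := by
      rw [g.mem_iff, Nat.cast_succ] at hmem
      rw [g.mem_iff] at hnotMem
      unfold lowEnd
      split_ifs with h0
      · rw [h0, Nat.cast_zero, zero_add] at hmem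
        rw [g.isSignedPerm.inv.map_neg]
        omega
      · exact hnotMem
    rw [mul_inv_rev, inv_sB, Equiv.Perm.mul_apply, sB_apply_natCast, lowerPart,
      Finset.mem_erase, Finset.mem_insert, Finset.mem_erase]
    split_ifs with h1 h2
    · simpa [h1] using hlow
    · rw [← Nat.cast_succ, ← g.mem_iff]
      simp [h2, hmem]
    · rw [← g.mem_iff]
      have := g.zero_notMem
      grind

lemma eq_one (g : IsGrassmannian m ∅ w) : w = 1 :=
  eq_one_of_forall_not_isLeftDescent g.isSignedPerm fun i _ ↦ by simp [g.isLeftDescent_iff]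

theorem card_RSet (g : IsGrassmannian m S w) :
    (Nat.card (RSet m w) : ℚ) = (∑ x ∈ S, x).factorial * schurProduct S := by
  induction h : ∑ x ∈ S, x generalizing S w with
  | zero =>
    have hS : S = ∅ := Finset.eq_empty_of_forall_notMem fun x hx ↦
      g.zero_notMem (Finset.sum_eq_zero_iff.1 h x hx ▸ hx)
    subst hS
    simp [g.eq_one, RSet_one, schurProduct]
  | succ N ih =>
    obtain ⟨x, hx, -⟩ := Finset.exists_ne_zero_of_sum_ne_zero (h.trans_ne N.succ_ne_zero)
    have hne : w ≠ 1 := by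
      rintro rfl
      have := (g.mem_iff x).1 hx
      rw [inv_one, Equiv.Perm.one_apply] at this
      omega
    have hterm : ∀ i ∈ Finset.filter (IsLeftDescent w) (Finset.range m),
        (Nat.card (RSet m (sB i * w)) : ℚ) = N.factorial * schurProduct (lowerPart S i) := by
      intro i hi
      rw [Finset.mem_filter, Finset.mem_range] at hi
      obtain ⟨hmem, hnotMem⟩ := g.isLeftDescent_iff.1 hi.2
      refine ih (g.sB_mul hi.1 hi.2) (Nat.succ_injective ?_)
      exact (sum_lowerPart_add_one hmem hnotMem).trans h
    calc (Nat.card (RSet m w) : ℚ)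
        = ∑ i ∈ Finset.range m with IsLeftDescent w i, (Nat.card (RSet m (sB i * w)) : ℚ) := by
          rw [card_RSet_eq_sum g.isSignedPerm hne, Nat.cast_sum]
      _ = N.factorial * ∑ i ∈ Finset.range m with i + 1 ∈ S ∧ i ∉ S,
            schurProduct (lowerPart S i) := by
          rw [Finset.sum_congr rfl hterm, Finset.mul_sum]
          simp only [g.isLeftDescent_iff]
      _ = (N + 1).factorial * schurProduct S := by
          rw [sum_schurProduct_lowerPart g.zero_notMem fun x ↦ g.le_of_mem, h,
            Nat.factorial_succ]
          push_cast
          ring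

end IsGrassmannian

lemma TransitionStage.isGrassmannian {w₀ : Equiv.Perm ℤ} {T : Set ℤ} {c : ℤ}
    (st : TransitionStage m w₀ 0 T c w) (hS : ∀ x : ℕ, x ∈ S ↔ 0 < x ∧ (x : ℤ) ∈ T) :
    IsGrassmannian m S w where
  isSignedPerm := st.isSignedPerm
  strictMonoOn x hx y hy hxy := by
    have hx' := st.isSignedPerm.natAbs_map_le (a := x)
    rcases le_or_gt y m with hym | hmy
    · exact st.strictMonoOn ⟨hx, hxy.le.trans hym⟩ ⟨hy, hym⟩ hxy
    · rw [st.isSignedPerm.map_of_lt y (by omega)]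
      rcases le_or_gt x m with hxm | hmx
      · rw [Set.mem_Ioi] at hx
        omega
      · rwa [st.isSignedPerm.map_of_lt x (by omega)]
  mem_iff x := by
    have hinv := st.isSignedPerm.inv
    rcases x.eq_zero_or_pos with rfl | hx
    · simp [hS, hinv.map_zero]
    · rw [hS, st.mem_iff x (by omega), and_iff_right hx, ← neg_pos, ← hinv.map_neg]
      refine ⟨fun ⟨i, hi, hwi⟩ ↦ ?_, fun h ↦ ⟨_, h, by simp⟩⟩
      rw [← hwi]
      simpa using hi

lemma ReachesStage.card_RSet_eq {w₀ : Equiv.Perm ℤ} {T : Set ℤ} {c : ℤ}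
    (h : ReachesStage m w₀ 0 T c) (hS : ∀ x : ℕ, x ∈ S ↔ 0 < x ∧ (x : ℤ) ∈ T) :
    (Nat.card (RSet m w₀) : ℚ) = (∑ x ∈ S, x).factorial * schurProduct S := by
  obtain ⟨w, st⟩ := h
  rw [← st.card_eq, (st.isGrassmannian hS).card_RSet]

end Grassmannian

/-! ### The two products -/

section StepTwoFinset

variable (q l : ℕ)

/-- `stepTwo q l` as a finset of natural numbers. -/
def stepTwoFinset (q l : ℕ) : Finset ℕ := (Finset.range l).image fun j ↦ q + 2 * j

lemma mem_stepTwoFinset {x : ℕ} : x ∈ stepTwoFinset q l ↔ (x : ℤ) ∈ stepTwo q l := by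
  simp only [stepTwoFinset, Finset.mem_image, Finset.mem_range, mem_stepTwo]
  refine ⟨?_, fun h ↦ ⟨(x - q) / 2, ?_⟩⟩ <;> grind

lemma stepTwoFinset_succ : stepTwoFinset q (l + 1) = insert q (stepTwoFinset (q + 2) l) := by
  ext x
  simp only [Finset.mem_insert, mem_stepTwoFinset, mem_stepTwo]
  omega

@[to_additive]
lemma prod_stepTwoFinset_eq {M : Type*} [CommMonoid M] (f : ℕ → M) :
    ∏ x ∈ stepTwoFinset q l, f x = ∏ j ∈ Finset.range l, f (q + 2 * j) :=
  Finset.prod_image (by intro a _ b _ h; grind)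

lemma sum_stepTwoFinset_succ : ∑ x ∈ stepTwoFinset (q + 1) l, x = l * (q + l) := by
  rw [sum_stepTwoFinset_eq]
  induction l with
  | zero => simp
  | succ l ih =>
    rw [Finset.sum_range_succ, ih]
    ring

lemma prod_abs_sub_div_add_stepTwoFinset :
    ∏ y ∈ stepTwoFinset (q + 2) l, |(q : ℚ) - y| / (q + y) =
      l.factorial * q.factorial / (q + l).factorial := by
  rw [prod_stepTwoFinset_eq]
  induction l with
  | zero => simp [q.factorial_ne_zero]
  | succ l ih =>
    rw [Finset.prod_range_succ, ih, ← add_assoc, Nat.factorial_succ, Nat.factorial_succ]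
    push_cast
    rw [show (q : ℚ) - (q + 2 + 2 * l) = -(2 * (l + 1)) by ring, abs_neg,
      abs_of_nonneg (by positivity)]
    field_simp
    ring

lemma schurProduct_stepTwoFinset_succ :
    schurProduct (stepTwoFinset q (l + 1)) =
      schurProduct (stepTwoFinset (q + 2) l) * (l.factorial / (q + l).factorial) := by
  have hq : q ∉ stepTwoFinset (q + 2) l := by
    rw [mem_stepTwoFinset, mem_stepTwo]
    omega
  rw [stepTwoFinset_succ, schurProduct_insert hq, prod_abs_sub_div_add_stepTwoFinset]
  field

lemma schurProduct_stepTwoFinset_one :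
    schurProduct (stepTwoFinset 1 (l + 2)) =
      schurProduct (stepTwoFinset 5 l) / ((l + 1) * (l + 2) ^ 2 * (l + 3)) := by
  rw [schurProduct_stepTwoFinset_succ, schurProduct_stepTwoFinset_succ,
    show 1 + (l + 1) = l + 2 by ring, show 1 + 2 + l = l + 3 by ring]
  simp only [Nat.factorial_succ]
  push_cast
  field_simp
  ring

lemma factorial_mul_schurProduct_stepTwoFinset_one :
    (((l + 2) ^ 2).factorial : ℚ) * schurProduct (stepTwoFinset 1 (l + 2)) =
      ((l + 2) ^ 2 - 2) * ((l + 2) ^ 2 - 3) *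
        ((l * (4 + l)).factorial * schurProduct (stepTwoFinset 5 l)) := by
  rw [schurProduct_stepTwoFinset_one, show (l + 2) ^ 2 = l * (4 + l) + 1 + 1 + 1 + 1 by ring]
  simp only [Nat.factorial_succ]
  push_cast
  field_simp
  ring

end StepTwoFinset

section LongestElement

variable {n : ℕ} {w : Equiv.Perm ℤ}

lemma reachesStage_start (hw : IsSignedPerm n w) (hn : 0 < n)
    (hfix : ∀ i : ℤ, 0 ≤ i → i < n → (w i).natAbs = i.natAbs) :
    ReachesStage (2 * n) w n (stepTwo (n + 1) 0) (w n) := by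
  have hmap {i : ℤ} (hi : n < i) : w i = i := hw.map_of_lt i (by omega)
  exact ⟨w, {
    isSignedPerm := hw.mono (by omega)
    map_last := hmap (by omega)
    strictMonoOn x hx y hy hxy := by rwa [hmap hx.1, hmap hy.1]
    map_of_lt _ _ _ := rfl
    natAbs_map_of_lt := hfix
    map_pivot := rfl
    mem_iff x hx := by
      refine ⟨fun h ↦ by rw [mem_stepTwo] at h; omega, fun ⟨i, hi, hwi⟩ ↦ ?_⟩
      rw [hmap hi] at hwi
      omega
    card_eq := rfl }⟩

lemma reachesStage_of_map_eq_neg (hw : IsSignedPerm n w) (hn : 0 < n)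
    (hfix : ∀ i : ℤ, 0 ≤ i → i < n → (w i).natAbs = i.natAbs) {k : ℕ} (hk : k ≤ n)
    (hneg : ∀ i : ℤ, n - k < i → i ≤ n → w i = -i) :
    ReachesStage (2 * n) w (n - k) (stepTwo (n - k + 1) k) (w (n - k)) := by
  induction k with
  | zero => simpa using reachesStage_start hw hn hfix
  | succ k ih =>
    have h := ih (by omega) fun i hi hin ↦ hneg i (by omega) hin
    rw [hneg (n - k) (by omega) (by omega)] at h
    rw [show (n : ℤ) - (k + 1 : ℕ) = n - k - 1 by omega, sub_add_cancel]
    exact h.of_negative_pivot (by omega) (by omega)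

lemma isSignedPerm_w0B (n : ℕ) : IsSignedPerm n (w0B n) where
  map_neg a := by
    change w0BFun n (-a) = -w0BFun n a
    unfold w0BFun
    split_ifs <;> omega
  map_of_lt a ha := if_neg (by omega)

lemma isSignedPerm_of_eq_wpFun (hw : ∀ i, w i = wpFun n i) : IsSignedPerm n w where
  map_neg a := by
    rw [hw, hw]
    unfold wpFun
    split_ifs <;> omega
  map_of_lt a ha := (hw a).trans (if_neg (by omega))

theorem card_RSet_w0B (hn : 0 < n) :
    (Nat.card (RSet n (w0B n)) : ℚ) =
      (n ^ 2).factorial * schurProduct (stepTwoFinset 1 n) := by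
  have hneg (i : ℤ) (hi : 0 ≤ i) (hin : i ≤ n) : w0B n i = -i := if_pos (by omega)
  have hw := isSignedPerm_w0B n
  have h := reachesStage_of_map_eq_neg hw hn
    (fun i hi hin ↦ by rw [hneg i hi hin.le, Int.natAbs_neg]) le_rfl
    fun i hi hin ↦ hneg i (by omega) hin
  rw [sub_self] at h
  rw [← RSet_eq_of_le hw (show n ≤ 2 * n by omega), h.card_RSet_eq (S := stepTwoFinset 1 n),
    sum_stepTwoFinset_succ 0, zero_add, sq]
  intro x
  rw [mem_stepTwoFinset, mem_stepTwo, mem_stepTwo]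
  omega

theorem card_RSet_of_eq_wpFun {N : ℕ} (hw : ∀ i, w i = wpFun (N + 2) i) :
    (Nat.card (RSet (N + 2) w) : ℚ) =
      (N * (4 + N)).factorial * schurProduct (stepTwoFinset 5 N) := by
  have hneg (i : ℤ) (hi : 2 < i) (hin : i ≤ N + 2) : w i = -i :=
    (hw i).trans (if_pos (by push_cast; omega))
  have hpos (i : ℤ) (hi : 0 ≤ i) (hi2 : i ≤ 2) : w i = i := (hw i).trans (if_neg (by omega))
  have hsigned := isSignedPerm_of_eq_wpFun hw
  have hfix (i : ℤ) (hi : 0 ≤ i) (hin : i < (N + 2 : ℕ)) : (w i).natAbs = i.natAbs := by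
    rcases le_or_gt i 2 with h | h
    · rw [hpos i hi h]
    · rw [hneg i h (by omega), Int.natAbs_neg]
  have h₂ := reachesStage_of_map_eq_neg hsigned (by omega) hfix (Nat.le_add_right N 2)
    fun i hi hin ↦ hneg i (by omega) (by omega)
  rw [show ((N + 2 : ℕ) : ℤ) - N = 2 by omega, hpos 2 (by omega) le_rfl] at h₂
  have h₁ := h₂.of_positive_pivot (by omega) (by omega) (by omega)
  rw [show (2 : ℤ) - 1 = 1 by omega, hpos 1 (by omega) (by omega)] at h₁
  have h₀ := h₁.of_positive_pivot (by omega) (by omega) (by omega)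
  rw [sub_self] at h₀
  rw [← RSet_eq_of_le hsigned (show N + 2 ≤ 2 * (N + 2) by omega),
    h₀.card_RSet_eq (S := stepTwoFinset 5 N), sum_stepTwoFinset_succ 4]
  intro x
  rw [mem_stepTwoFinset, mem_stepTwo, mem_stepTwo]
  omega

end LongestElement

/-- For every `n ≥ 2`, with `w = w' ∈ Bₙ`, `|R(w₀ᴮ)| = (n² - 2)(n² - 3) · |R(w')|`. -/
theorem card_Rw0B_eq (n : ℕ) (hn : 2 ≤ n)
    (w : Equiv.Perm ℤ) (hw : ∀ i : ℤ, w i = wpFun n i) :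
    Nat.card ↥(RSet n (w0B n))
      = (n ^ 2 - 2) * (n ^ 2 - 3) * Nat.card ↥(RSet n w) := by
  obtain ⟨N, rfl⟩ := Nat.exists_eq_add_of_le' hn
  have h4 : 4 ≤ (N + 2) ^ 2 := by nlinarith
  rw [← Nat.cast_inj (R := ℚ)]
  push_cast [Nat.cast_sub (show 2 ≤ (N + 2) ^ 2 by omega),
    Nat.cast_sub (show 3 ≤ (N + 2) ^ 2 by omega)]
  rw [card_RSet_w0B (by omega), card_RSet_of_eq_wpFun hw,
    factorial_mul_schurProduct_stepTwoFinset_one]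
end

section
/- For every integer n ≥ 3, the rational numbers C_1, …, C_{n−2} defined below satisfy Σ_{k=1}^{n−2} C_k = 3n(n² − 1)(n − 2). -/
/-- The rational number `C_k` (depending on `n`):
`C_k = [3·5⋯(2k+3)]/[2·4⋯(2k)] · [3·5⋯(2n-2k-1)]/[2·4⋯(2n-2k-4)]
       · [(2k+4)(2k+6)⋯(4k+4)]/[(2k+1)(2k+3)⋯(4k+1)]
       · [(4k+8)(4k+10)⋯(2n+2k+2)]/[(4k+5)(4k+7)⋯(2n+2k-1)]`,
where empty products equal `1`. -/
def C (n k : ℕ) : ℚ :=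
  ((∏ j ∈ Finset.Icc 1 (k + 1), (2 * (j : ℚ) + 1)) /
      (∏ j ∈ Finset.Icc 1 k, (2 * (j : ℚ)))) *
  ((∏ j ∈ Finset.Icc 1 (n - k - 1), (2 * (j : ℚ) + 1)) /
      (∏ j ∈ Finset.Icc 1 (n - k - 2), (2 * (j : ℚ)))) *
  ((∏ j ∈ Finset.Icc (k + 2) (2 * k + 2), (2 * (j : ℚ))) /
      (∏ j ∈ Finset.Icc k (2 * k), (2 * (j : ℚ) + 1))) *
  ((∏ j ∈ Finset.Icc (2 * k + 4) (n + k + 1), (2 * (j : ℚ))) /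
      (∏ j ∈ Finset.Icc (2 * k + 2) (n + k - 1), (2 * (j : ℚ) + 1)))

/-!
Up to the factor `4 n (n² - 1)`, which does not involve `k`, the number `C_k` is the `k`-th term of
the very-well-poised series
`∑ (a + 2k) (a)_k (b)_k (c)_k (-m)_k / (k! (1+a-b)_k (1+a-c)_k (1+a+m)_k)`
at `m = n - 2`, `a = 3/2`, `b = 1/2`, `c = m + 4`. Dougall's `₅F₄` theorem evaluates this series,
and including the term `k = 0` gives `∑_{k=0}^{n-2} C_k = 3 n² (n² - 1)`, from which
`C_0 = 6 n (n² - 1)` is subtracted. Dougall's theorem itself follows by induction on `m`: a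
combination of the terms for `-m` and `-(m + 1)` telescopes.
-/

open Finset
open scoped Nat

section Dougall

lemma prod_range_add_eq_prod_neg {R : Type*} [CommRing R] (x : R) (m : ℕ) :
    ∏ j ∈ range m, (x + j) = ∏ j ∈ range m, -(1 - m - x + j) := by
  rw [← prod_range_reflect]
  refine prod_congr rfl fun j hj ↦ ?_
  rw [Nat.sub_sub, Nat.cast_sub (by have := mem_range.mp hj; omega)]
  push_cast
  ring

variable {K : Type*} [Field K]

lemma prod_range_add_one_div {x : K} (hx : ∀ j : ℕ, x + j ≠ 0) (m : ℕ) :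
    ∏ j ∈ range m, (x + j + 1) / (x + j) = (x + m) / x := by
  have hx₀ : x ≠ 0 := by simpa using hx 0
  induction m with
  | zero => simp [hx₀]
  | succ m ih =>
    have hxm := hx m
    rw [prod_range_succ, ih]
    push_cast
    field_simp
    ring

/-- The `k`-th term `(a)_k (b)_k (c)_k (d)_k / (k! (1+a-b)_k (1+a-c)_k (1+a-d)_k)` of the
well-poised hypergeometric series, encoded as the product of its consecutive ratios. -/
def wellPoisedTerm (a b c d : K) (k : ℕ) : K :=
  ∏ j ∈ range k, (a + j) * (b + j) * (c + j) * (d + j) /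
    ((j + 1) * (1 + a - b + j) * (1 + a - c + j) * (1 + a - d + j))

@[simp]
lemma wellPoisedTerm_zero (a b c d : K) : wellPoisedTerm a b c d 0 = 1 := prod_range_zero _

lemma wellPoisedTerm_succ (a b c d : K) (k : ℕ) :
    wellPoisedTerm a b c d (k + 1) = wellPoisedTerm a b c d k *
      ((a + k) * (b + k) * (c + k) * (d + k) /
        ((k + 1) * (1 + a - b + k) * (1 + a - c + k) * (1 + a - d + k))) :=
  prod_range_succ _ _

lemma wellPoisedTerm_neg_natCast_succ (a b c : K) (m : ℕ) :
    wellPoisedTerm a b c (-m) (m + 1) = 0 := by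
  simp [wellPoisedTerm_succ]

variable {a b c d : K}

lemma wellPoisedTerm_add_one (hd : ∀ j : ℕ, a - d + j ≠ 0) (k : ℕ) :
    d * (a - d) * wellPoisedTerm a b c (d + 1) k =
      (d + k) * (a - d + k) * wellPoisedTerm a b c d k := by
  induction k with
  | zero => simp
  | succ k ih =>
    have hdk := hd k
    have hdk' : 1 + a - d + k ≠ 0 := by
      convert hd (k + 1) using 1
      push_cast
      ring
    rw [wellPoisedTerm_succ, wellPoisedTerm_succ, ← mul_assoc, ih,
      show 1 + a - (d + 1) + k = a - d + k by ring]
    push_cast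
    field_simp
    ring

variable [CharZero K]

lemma sum_wellPoisedTerm_telescope (hb : ∀ j : ℕ, 1 + a - b + j ≠ 0)
    (hc : ∀ j : ℕ, 1 + a - c + j ≠ 0) (hd : ∀ j : ℕ, 1 + a - d + j ≠ 0) (N : ℕ) :
    ∑ k ∈ range N, (a + 2 * k) * (b * c * d + k * (a + k) * (b + c + d - a)) *
        wellPoisedTerm a b c d k =
      N * (a - b + N) * (a - c + N) * (a - d + N) * wellPoisedTerm a b c d N := by
  induction N with
  | zero => simp
  | succ N ih =>
    have hN : (N + 1 : K) ≠ 0 := Nat.cast_add_one_ne_zero N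
    have hbN := hb N
    have hcN := hc N
    have hdN := hd N
    rw [sum_range_succ, ih, wellPoisedTerm_succ]
    push_cast
    field_simp
    ring

lemma sum_wellPoisedTerm_contiguous (hb : ∀ j : ℕ, 1 + a - b + j ≠ 0)
    (hc : ∀ j : ℕ, 1 + a - c + j ≠ 0) (hd : ∀ j : ℕ, a - d + j ≠ 0) (N : ℕ) :
    d * ((a - b - d) * (a - c - d) * ∑ k ∈ range N, (a + 2 * k) * wellPoisedTerm a b c d k -
        (a - d) * (a - b - c - d) *
          ∑ k ∈ range N, (a + 2 * k) * wellPoisedTerm a b c (d + 1) k) =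
      N * (a - b + N) * (a - c + N) * (a - d + N) * wellPoisedTerm a b c d N := by
  have hd' (j : ℕ) : 1 + a - d + j ≠ 0 := by
    convert hd (j + 1) using 1
    push_cast
    ring
  rw [← sum_wellPoisedTerm_telescope hb hc hd', mul_sum, mul_sum, ← sum_sub_distrib, mul_sum]
  refine sum_congr rfl fun k _ ↦ ?_
  linear_combination (-(a - b - c - d) * (a + 2 * k)) * wellPoisedTerm_add_one hd k

theorem dougall_sum_wellPoisedTerm (ha : ∀ j : ℕ, 1 + a + j ≠ 0)
    (hb : ∀ j : ℕ, 1 + a - b + j ≠ 0) (hc : ∀ j : ℕ, 1 + a - c + j ≠ 0) (m : ℕ) :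
    ∑ k ∈ range (m + 1), (a + 2 * k) * wellPoisedTerm a b c (-m) k =
      a * ∏ j ∈ range m,
        (1 + a + j) * (1 + a - b - c + j) / ((1 + a - b + j) * (1 + a - c + j)) := by
  induction m with
  | zero => simp
  | succ m ih =>
    have hd (j : ℕ) : a - -((m + 1 : ℕ) : K) + j ≠ 0 := by
      convert ha (m + j) using 1
      push_cast
      ring
    have hm : ((m + 1 : ℕ) : K) ≠ 0 := Nat.cast_ne_zero.mpr m.succ_ne_zero
    have drop_last : ∑ k ∈ range (m + 2), (a + 2 * k) * wellPoisedTerm a b c (-m) k =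
        ∑ k ∈ range (m + 1), (a + 2 * k) * wellPoisedTerm a b c (-m) k := by
      rw [sum_range_succ, wellPoisedTerm_neg_natCast_succ, mul_zero, add_zero]
    have recurrence : (1 + a - b + m) * (1 + a - c + m) *
          ∑ k ∈ range (m + 2), (a + 2 * k) * wellPoisedTerm a b c (-(m + 1 : ℕ)) k =
        (1 + a + m) * (1 + a - b - c + m) *
          ∑ k ∈ range (m + 1), (a + 2 * k) * wellPoisedTerm a b c (-m) k := by
      have contiguous := sum_wellPoisedTerm_contiguous hb hc hd (m + 2)
      rw [wellPoisedTerm_neg_natCast_succ, mul_zero, mul_eq_zero_iff_left (neg_ne_zero.mpr hm),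
        show -((m + 1 : ℕ) : K) + 1 = -m by push_cast; ring, drop_last] at contiguous
      push_cast at contiguous ⊢
      linear_combination contiguous
    rw [prod_range_succ, ← mul_assoc, ← ih, mul_div_assoc', eq_div_iff (mul_ne_zero (hb m) (hc m))]
    linear_combination recurrence

end Dougall

section DoubleFactorial

variable {K : Type*} [Field K] [CharZero K]

lemma prod_Icc_two_mul_eq_div {a b : ℕ} (hab : a ≤ b) :
    ∏ j ∈ Icc (a + 1) b, (2 * j : K) = (2 * b)‼ / (2 * a)‼ := by
  have ha : ((2 * a)‼ : K) ≠ 0 := Nat.cast_ne_zero.mpr (Nat.doubleFactorial_pos _).ne'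
  induction b, hab using Nat.le_induction with
  | base => simp [ha]
  | succ b hab ih =>
    rw [prod_Icc_succ_top (by omega), ih, mul_add_one, Nat.doubleFactorial_add_two]
    push_cast
    ring

/-- At `a = 0` the truncated `(2 * a - 1)‼ = 0‼ = 1` agrees with the convention `(-1)‼ = 1`. -/
lemma prod_Icc_two_mul_add_one_eq_div {a b : ℕ} (hab : a ≤ b + 1) :
    ∏ j ∈ Icc a b, (2 * j + 1 : K) = (2 * b + 1)‼ / (2 * a - 1)‼ := by
  have ha : ((2 * a - 1)‼ : K) ≠ 0 := Nat.cast_ne_zero.mpr (Nat.doubleFactorial_pos _).ne'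
  obtain rfl | hab := Nat.le_succ_iff_eq_or_le.mp hab
  · rw [Icc_eq_empty (by omega), prod_empty, eq_div_iff ha, one_mul]
    rfl
  induction b, hab using Nat.le_induction with
  | base =>
    rw [Icc_self, prod_singleton, Nat.doubleFactorial_add_one]
    push_cast
    field_simp
  | succ b hab' ih =>
    rw [prod_Icc_succ_top (by omega), ih (by omega), Nat.doubleFactorial_add_one (2 * (b + 1))]
    push_cast [mul_add_one]
    ring

end DoubleFactorial

lemma C_eq_doubleFactorial (k d : ℕ) :
    C (k + d + 2) k =
      ((2 * k + 3)‼ / (2 * k)‼) * ((2 * d + 3)‼ / (2 * d)‼) *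
      ((4 * k + 4)‼ / (2 * k + 2)‼ / ((4 * k + 1)‼ / (2 * k - 1)‼)) *
      ((4 * k + 2 * d + 6)‼ / (4 * k + 6)‼ / ((4 * k + 2 * d + 3)‼ / (4 * k + 3)‼)) := by
  rw [C, show k + d + 2 - k - 1 = d + 1 by omega, show k + d + 2 - k - 2 = d by omega,
    show k + d + 2 + k + 1 = 2 * k + d + 3 by omega,
    show k + d + 2 + k - 1 = 2 * k + d + 1 by omega]
  have even (a b : ℕ) (h : a ≤ b) := prod_Icc_two_mul_eq_div (K := ℚ) h
  have odd (a b : ℕ) (h : a ≤ b + 1) := prod_Icc_two_mul_add_one_eq_div (K := ℚ) h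
  rw [odd _ _ (by omega), odd _ _ (by omega), odd _ _ (by omega), odd _ _ (by omega),
    even 0 _ (by omega), even 0 _ (by omega), even (k + 1) _ (by omega),
    even (2 * k + 3) _ (by omega)]
  simp [mul_add, ← mul_assoc, add_assoc]

lemma C_succ (k d : ℕ) :
    C (k + d + 3) (k + 1) =
      C (k + d + 3) k * ((d + 1) * (2 * k + d + 5) * (2 * k + 1) * (2 * k + 3) * (4 * k + 7) /
        ((k + 1) * (k + 2) * (2 * d + 5) * (4 * k + 3) * (4 * k + 2 * d + 7))) := by
  have h₁ := C_eq_doubleFactorial (k + 1) d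
  have h₀ := C_eq_doubleFactorial k (d + 1)
  rw [show k + 1 + d + 2 = k + d + 3 by ring] at h₁
  rw [show k + (d + 1) + 2 = k + d + 3 by ring] at h₀
  have hodd : (2 * k + 1)‼ = (2 * k + 1) * (2 * k - 1)‼ := Nat.doubleFactorial_add_one (2 * k)
  rw [h₀, h₁, show 2 * (k + 1) - 1 = 2 * k + 1 by omega, mul_add_one, mul_add_one, mul_add_one,
    show 4 * k + 4 + 2 * d + 6 = 4 * k + 2 * d + 10 by ring,
    show 4 * k + 4 + 2 * d + 3 = 4 * k + 2 * d + 7 by ring]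
  simp only [← add_assoc, Nat.doubleFactorial_add_two, hodd]
  push_cast
  field_simp
  ring

lemma C_zero (m : ℕ) : C (m + 2) 0 = 6 * (m + 1 : ℚ) * (m + 2) * (m + 3) := by
  have closed_form : C (m + 2) 0 = 3 * ((2 * m + 3)‼ / (2 * m)‼) * (8 / 2) *
      ((2 * m + 6)‼ / 48 / ((2 * m + 3)‼ / 3)) := by
    simpa using C_eq_doubleFactorial 0 m
  rw [closed_form, Nat.doubleFactorial_add_two (2 * m + 4), Nat.doubleFactorial_add_two (2 * m + 2),
    Nat.doubleFactorial_add_two (2 * m)]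
  push_cast
  field_simp
  ring

lemma C_eq_wellPoisedTerm {m k : ℕ} (hk : k ≤ m) :
    C (m + 2) k = 4 * (m + 1 : ℚ) * (m + 2) * (m + 3) *
      ((3 / 2 + 2 * k) * wellPoisedTerm (3 / 2 : ℚ) (1 / 2) (m + 4) (-m) k) := by
  induction k with
  | zero =>
    rw [C_zero, wellPoisedTerm_zero]
    push_cast
    ring
  | succ k ih =>
    obtain ⟨d, rfl⟩ := Nat.exists_eq_add_of_lt hk
    have ratio : (3 / 2 + k : ℚ) * (1 / 2 + k) * ((k + d + 1 : ℕ) + 4 + k) *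
          (-((k + d + 1 : ℕ) : ℚ) + k) /
        ((k + 1) * (1 + 3 / 2 - 1 / 2 + k) * (1 + 3 / 2 - ((k + d + 1 : ℕ) + 4) + k) *
          (1 + 3 / 2 - -((k + d + 1 : ℕ) : ℚ) + k)) =
        (2 * k + 3) * (2 * k + 1) * (2 * k + d + 5) * (d + 1) /
          ((k + 1) * (k + 2) * (2 * d + 5) * (4 * k + 2 * d + 7)) := by
      rw [show (1 + 3 / 2 - 1 / 2 + k : ℚ) = k + 2 by ring,
        show (1 + 3 / 2 - ((k + d + 1 : ℕ) + 4) + k : ℚ) = -(2 * d + 5) / 2 by push_cast; ring,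
        show (1 + 3 / 2 - -((k + d + 1 : ℕ) : ℚ) + k : ℚ) = (4 * k + 2 * d + 7) / 2 by
          push_cast; ring]
      push_cast
      field_simp
      ring
    rw [C_succ, ih (by omega), wellPoisedTerm_succ, ratio]
    push_cast
    field_simp
    ring

lemma sum_wellPoisedTerm_three_halves (m : ℕ) :
    ∑ k ∈ range (m + 1), (3 / 2 + 2 * k) * wellPoisedTerm (3 / 2 : ℚ) (1 / 2) (m + 4) (-m) k =
      3 * (m + 2) / 4 := by
  have ha (j : ℕ) : (1 + 3 / 2 + j : ℚ) ≠ 0 := by positivity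
  have hb (j : ℕ) : (1 + 3 / 2 - 1 / 2 + j : ℚ) ≠ 0 := by
    rw [show (1 + 3 / 2 - 1 / 2 + j : ℚ) = 2 + j by ring]
    positivity
  have hc (j : ℕ) : (1 + 3 / 2 - (m + 4) + j : ℚ) ≠ 0 := by
    intro h
    have parity : 2 * j = 2 * m + 3 := by
      have : (2 * j : ℚ) = 2 * m + 3 := by linear_combination 2 * h
      exact_mod_cast this
    omega
  rw [dougall_sum_wellPoisedTerm ha hb hc, prod_div_distrib, prod_mul_distrib, prod_mul_distrib,
    prod_range_add_eq_prod_neg (1 + 3 / 2 - 1 / 2 - (m + 4) : ℚ),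
    prod_range_add_eq_prod_neg (1 + 3 / 2 - (m + 4) : ℚ),
    ← prod_mul_distrib, ← prod_mul_distrib, ← prod_div_distrib]
  have cancel (j : ℕ) : (1 + 3 / 2 + j : ℚ) * -(1 - m - (1 + 3 / 2 - 1 / 2 - (m + 4)) + j) /
      ((1 + 3 / 2 - 1 / 2 + j) * -(1 - m - (1 + 3 / 2 - (m + 4)) + j)) = (2 + j + 1) / (2 + j) := by
    rw [show (1 - m - (1 + 3 / 2 - 1 / 2 - (m + 4)) + j : ℚ) = 2 + j + 1 by ring,
      show (1 - m - (1 + 3 / 2 - (m + 4)) + j : ℚ) = 1 + 3 / 2 + j by ring,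
      show (1 + 3 / 2 - 1 / 2 + j : ℚ) = 2 + j by ring]
    field_simp
  simp only [cancel, prod_range_add_one_div (x := (2 : ℚ)) fun j ↦ by positivity]
  ring

lemma sum_range_C (m : ℕ) :
    ∑ k ∈ range (m + 1), C (m + 2) k = 3 * (m + 1 : ℚ) * (m + 2) ^ 2 * (m + 3) := by
  rw [sum_congr rfl fun k hk ↦ C_eq_wellPoisedTerm (mem_range_succ_iff.mp hk), ← mul_sum,
    sum_wellPoisedTerm_three_halves]
  ring

/-- For every `n ≥ 3`, `Σ_{k=1}^{n-2} C_k = 3n(n² - 1)(n - 2)`. -/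
theorem sum_C_eq (n : ℕ) (hn : 3 ≤ n) :
    ∑ k ∈ Finset.Icc 1 (n - 2), C n k
      = 3 * (n : ℚ) * ((n : ℚ) ^ 2 - 1) * ((n : ℚ) - 2) := by
  obtain ⟨m, rfl⟩ := Nat.exists_eq_add_of_le' (le_of_add_le_right hn : 2 ≤ n)
  have total := sum_range_C m
  rw [range_eq_Ico, sum_eq_sum_Ico_succ_bot m.succ_pos, C_zero] at total
  rw [Nat.add_sub_cancel, ← Ico_add_one_right_eq_Icc]
  push_cast
  linear_combination total
end

section
/- For every integer n ≥ 3 and every k with 1 ≤ k ≤ n−2, the element w_k ∈ B_n is vexillary for type B; that is, w_k avoids each of the nine signed patterns 2 1; −3 2 −1; 2 −3 4 −1; −2 −3 4 −1; 3 −4 −1 −2; −3 −4 1 −2; −3 −4 −1 −2; −4 1 −2 3; −4 −1 −2 3. -/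
/-!
On `{1, …, n}`, `w_k` is the negative of the transposition `(k k+2)`. All its values there are
negative, so `w_k` can only contain patterns without positive entries; of the nine patterns only
`-3 -4 -1 -2` qualifies. Its ascents are the inversions of `(k k+2)`, so they join positions at
distance at most two, whereas the ascent `-3 < -2` of the remaining pattern spans distance three.
-/

theorem le_and_le_of_swap_lt_swap {α : Type*} [LinearOrder α] {x y a b : α} (hxy : x ≤ y)
    (hab : a < b) (h : Equiv.swap x y b < Equiv.swap x y a) : x ≤ a ∧ b ≤ y := by
  rw [Equiv.swap_apply_def, Equiv.swap_apply_def] at h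
  grind

theorem coe_sub_coe_le_of_strictMono {m : ℕ} {f : Fin m → ℤ} (hf : StrictMono f) {r s : Fin m}
    (hrs : r ≤ s) : (s : ℤ) - r ≤ f s - f r := by
  have hcard : (Finset.Icc r s).card ≤ (Finset.Icc (f r) (f s)).card :=
    Finset.card_le_card_of_injOn f (by simpa using hf.monotone.mapsTo_Icc) hf.injective.injOn
  have hfrs := hf.monotone hrs
  rw [Fin.card_Icc, Int.card_Icc] at hcard
  lia

namespace ContainsPattern

variable {n : ℕ} {w : ℤ → ℤ} {p : List ℤ}

theorem neg_of_mem (h : ContainsPattern n w p) (hw : ∀ i ∈ Set.Icc 1 (n : ℤ), w i < 0) :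
    ∀ x ∈ p, x < 0 := by
  obtain ⟨j, -, hj, -, hsign⟩ := h
  intro x hx
  obtain ⟨r, rfl⟩ := List.get_of_mem hx
  exact (hsign r).1 (hw (j r) (hj r))

theorem sub_le_of_get_lt_get {d : ℤ} (h : ContainsPattern n w p)
    (hw : ∀ a ∈ Set.Icc 1 (n : ℤ), ∀ b ∈ Set.Icc 1 (n : ℤ), a < b → w a < w b → b - a ≤ d)
    {r s : Fin p.length} (hrs : r < s) (hp : p.get r < p.get s) : (s : ℤ) - r ≤ d := by
  obtain ⟨j, hmono, hj, horder, -⟩ := h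
  calc (s : ℤ) - r ≤ j s - j r := coe_sub_coe_le_of_strictMono hmono hrs.le
    _ ≤ d := hw (j r) (hj r) (j s) (hj s) (hmono hrs) ((horder r s).2 hp)

end ContainsPattern

theorem wkFun_eq_neg_swap {n k : ℕ} {i : ℤ} (hi : i ∈ Set.Icc 1 (n : ℤ)) :
    wkFun n k i = -Equiv.swap (k : ℤ) (k + 2) i := by
  obtain ⟨hi1, hin⟩ := hi
  rw [wkFun, Equiv.swap_apply_def]
  split_ifs <;> lia

theorem wkFun_neg {n k : ℕ} (hk : 1 ≤ k) {i : ℤ} (hi : i ∈ Set.Icc 1 (n : ℤ)) :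
    wkFun n k i < 0 := by
  have hi1 : 1 ≤ i := hi.1
  rw [wkFun_eq_neg_swap hi, Equiv.swap_apply_def]
  split_ifs <;> lia

theorem sub_le_two_of_wkFun_lt {n k : ℕ} {a b : ℤ} (ha : a ∈ Set.Icc 1 (n : ℤ))
    (hb : b ∈ Set.Icc 1 (n : ℤ)) (hab : a < b) (h : wkFun n k a < wkFun n k b) :
    b - a ≤ 2 := by
  rw [wkFun_eq_neg_swap ha, wkFun_eq_neg_swap hb, neg_lt_neg_iff] at h
  obtain ⟨hka, hbk⟩ := le_and_le_of_swap_lt_swap (by lia) hab h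
  lia

/-- For every `n ≥ 3` and `1 ≤ k ≤ n - 2`, the element `w_k ∈ Bₙ` is vexillary for
type `B`: it avoids each of the nine signed patterns. -/
theorem wk_vexillary (n k : ℕ) (hn : 3 ≤ n) (hk1 : 1 ≤ k) (hk2 : k ≤ n - 2) :
    ∀ p ∈ [([2, 1] : List ℤ), [-3, 2, -1], [2, -3, 4, -1], [-2, -3, 4, -1],
        [3, -4, -1, -2], [-3, -4, 1, -2], [-3, -4, -1, -2], [-4, 1, -2, 3],
        [-4, -1, -2, 3]],
      ¬ ContainsPattern n (wkFun n k) p := by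
  intro p hp hcontains
  obtain ⟨x, hx, hpos⟩ | rfl : (∃ x ∈ p, 0 < x) ∨ p = [-3, -4, -1, -2] := by
    clear hcontains
    revert p
    decide
  · exact hpos.not_gt (hcontains.neg_of_mem (fun _ hi => wkFun_neg hk1 hi) x hx)
  · have hspan : (3 : ℤ) - 0 ≤ 2 :=
      hcontains.sub_le_of_get_lt_get (fun _ ha _ hb => sub_le_two_of_wkFun_lt ha hb)
        (r := (0 : Fin 4)) (s := (3 : Fin 4)) (by decide) (by decide)
    norm_num at hspan
end

section
/- For every integer n ≥ 2, the element w′ ∈ B_n is vexillary for type B; that is, w′ avoids each of the nine signed patterns 2 1; −3 2 −1; 2 −3 4 −1; −2 −3 4 −1; 3 −4 −1 −2; −3 −4 1 −2; −3 −4 −1 −2; −4 1 −2 3; −4 −1 −2 3. -/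
/-! If `|w(1)| < ⋯ < |w(n)|`, then any two entries of `w` with the same sign appear in increasing
order of absolute value, and every signed pattern contained in `w` inherits this property. Each of
the nine patterns violates it: `2 1` itself, and in the other eight one of the pairs `-3 … -1`,
`-4 … -1`, `-4 … -2`. The elements of `Bₙ` covered by this argument are exactly the `2ⁿ` sign
changes `|w(i)| = i`, among them `w'`. -/

lemma ContainsPattern.pairwise_abs_lt_abs {n : ℕ} {w : ℤ → ℤ} {p : List ℤ}
    (hp : ContainsPattern n w p) (hw : StrictMonoOn (fun i => |w i|) (Set.Icc 1 (n : ℤ))) :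
    p.Pairwise fun a b => (a < 0 ↔ b < 0) → |a| < |b| := by
  obtain ⟨j, hj, hmem, hlt, hneg⟩ := hp
  rw [List.pairwise_iff_get]
  intro r s hrs hsign
  have habs : |w (j r)| < |w (j s)| := hw (hmem r) (hmem s) (hj hrs)
  by_cases hs : p.get s < 0
  · have hr : p.get r < 0 := hsign.mpr hs
    rw [abs_of_neg ((hneg r).mpr hr), abs_of_neg ((hneg s).mpr hs), neg_lt_neg_iff, hlt] at habs
    rwa [abs_of_neg hr, abs_of_neg hs, neg_lt_neg_iff]
  · have hr : ¬ p.get r < 0 := mt hsign.mp hs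
    rw [abs_of_nonneg (not_lt.mp (mt (hneg r).mp hr)),
      abs_of_nonneg (not_lt.mp (mt (hneg s).mp hs)), hlt] at habs
    rwa [abs_of_nonneg (not_lt.mp hr), abs_of_nonneg (not_lt.mp hs)]

lemma abs_wpFun (n : ℕ) (i : ℤ) : |wpFun n i| = |i| := by
  unfold wpFun
  split_ifs
  · exact abs_neg i
  · rfl

lemma strictMonoOn_abs_wpFun (n : ℕ) : StrictMonoOn (fun i => |wpFun n i|) (Set.Ici 0) := by
  simp only [abs_wpFun]
  exact strictMonoOn_id.congr fun i hi => (abs_of_nonneg hi).symm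

theorem wp_vexillary_general {n : ℕ} {w : ℤ → ℤ}
    (hw : StrictMonoOn (fun i => |w i|) (Set.Icc 1 (n : ℤ))) :
    ∀ p ∈ [([2, 1] : List ℤ), [-3, 2, -1], [2, -3, 4, -1], [-2, -3, 4, -1],
        [3, -4, -1, -2], [-3, -4, 1, -2], [-3, -4, -1, -2], [-4, 1, -2, 3],
        [-4, -1, -2, 3]],
      ¬ ContainsPattern n w p := by
  intro p hp
  refine mt (·.pairwise_abs_lt_abs hw) ?_
  revert p
  decide

/-- For every `n ≥ 2`, the element `w' ∈ Bₙ` is vexillary for type `B`: it avoids each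
of the nine signed patterns. -/
theorem wp_vexillary (n : ℕ) (hn : 2 ≤ n) :
    ∀ p ∈ [([2, 1] : List ℤ), [-3, 2, -1], [2, -3, 4, -1], [-2, -3, 4, -1],
        [3, -4, -1, -2], [-3, -4, 1, -2], [-3, -4, -1, -2], [-4, 1, -2, 3],
        [-4, -1, -2, 3]],
      ¬ ContainsPattern n (wpFun n) p :=
  wp_vexillary_general <| (strictMonoOn_abs_wpFun n).mono fun _ hi => zero_le_one.trans hi.1
end
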